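/- arXiv:1207.0640 — 2 statements merged into one kernel-verified Lean document; each statement's English description precedes it below -/
import Mathlib

section
/- Let Γ be a planar network of rank n (a finite graph embedded in a vertical strip with straight-line non-vertical edges, n sources on the left boundary and n sinks on the right boundary at heights 1,...,n), and for 0 ≤ k ≤ n let Γ^{(k)} be the subnetwork obtained by deleting all sources and sinks at heights above k. For any real weighting ε, the numbers t_i^k = l_iΓ^{(k)}(ε) (the maximal total weight of i pairwise disjoint source-to-sink paths in Γ^{(k)}; t_0^k = 0) satisfy, whenever they are all finite, the inequalities t_i^k + t_{i-1}^{k-1} ≥ t_{i-1}^k + t_i^{k-1} and t_i^k + t_i^{k-1} ≥ t_{i+1}^k + t_{i-1}^{k-1} for all 0 < i ≤ k−1 < n. -/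
open scoped BigOperators

/-- A planar network: a finite graph embedded in the vertical strip
`{a ≤ x ≤ b}` with straight-line, non-vertical edges, oriented from left to
right; edge segments meet only at common endpoints, and no vertex lies in the
interior of an edge. -/
structure PlanarNetwork where
  a : ℝ
  b : ℝ
  hab : a < b
  V : Finset (ℝ × ℝ)
  E : Finset ((ℝ × ℝ) × (ℝ × ℝ))
  strip : ∀ p ∈ V, a ≤ p.1 ∧ p.1 ≤ b
  ends : ∀ e ∈ E, e.1 ∈ V ∧ e.2 ∈ V ∧ e.1.1 < e.2.1
  embed : ∀ e ∈ E, ∀ f ∈ E, e ≠ f →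
    ∀ x ∈ openSegment ℝ e.1 e.2, x ∉ segment ℝ f.1 f.2
  embedV : ∀ e ∈ E, ∀ p ∈ V, p ∉ openSegment ℝ e.1 e.2

/-- The network has `n` sources on the left boundary and `n` sinks on the
right boundary, at heights `1, …, n`. -/
def PlanarNetwork.HasRank (Γ : PlanarNetwork) (n : ℕ) : Prop :=
  (∀ p ∈ Γ.V, p.1 = Γ.a → ∃ j : ℕ, 1 ≤ j ∧ j ≤ n ∧ p.2 = (j : ℝ)) ∧
  (∀ p ∈ Γ.V, p.1 = Γ.b → ∃ j : ℕ, 1 ≤ j ∧ j ≤ n ∧ p.2 = (j : ℝ)) ∧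
  (∀ j : ℕ, 1 ≤ j → j ≤ n →
    (Γ.a, (j : ℝ)) ∈ Γ.V ∧ (Γ.b, (j : ℝ)) ∈ Γ.V)

/-- The weight of a path (recorded as the list of its vertices): the sum of
the weights of its edges. -/
def pathWeight {α : Type*} [AddCommMonoid α]
    (ε : (ℝ × ℝ) × (ℝ × ℝ) → α) (L : List (ℝ × ℝ)) : α :=
  ((L.zip L.tail).map ε).sum

/-- `L` is a directed path in `Γ` from `p` to `q`. -/
def IsPathBetween (Γ : PlanarNetwork) (p q : ℝ × ℝ) (L : List (ℝ × ℝ)) : Prop :=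
  L ≠ [] ∧ List.Chain' (fun u v => (u, v) ∈ Γ.E) L ∧
    L.head? = some p ∧ L.getLast? = some q

/-- `L` is a directed path in `Γ` from a source to a sink. -/
def IsThroughPath (Γ : PlanarNetwork) (L : List (ℝ × ℝ)) : Prop :=
  ∃ p q, IsPathBetween Γ p q L ∧ p.1 = Γ.a ∧ q.1 = Γ.b

/-- `L` is a source-to-sink path of the subnetwork `Γ^{(k)}` (both endpoints
at height at most `k`). -/
def IsBoundedPath (Γ : PlanarNetwork) (k : ℕ) (L : List (ℝ × ℝ)) : Prop :=
  ∃ p q, IsPathBetween Γ p q L ∧ p.1 = Γ.a ∧ q.1 = Γ.b ∧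
    p.2 ≤ (k : ℝ) ∧ q.2 ≤ (k : ℝ)

/-- Pairwise vertex-disjointness of a family of paths. -/
def PairwiseVertexDisjoint {m : ℕ} (F : Fin m → List (ℝ × ℝ)) : Prop :=
  ∀ j j', j ≠ j' → ∀ v ∈ F j, v ∉ F j'

/-- The set of total weights of `i`-multipaths of `Γ^{(k)}`: unions of `i`
pairwise vertex-disjoint source-to-sink paths with endpoints at height ≤ `k`. -/
def boundedWeights (Γ : PlanarNetwork) (ε : (ℝ × ℝ) × (ℝ × ℝ) → ℝ)
    (i k : ℕ) : Set ℝ :=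
  { x | ∃ F : Fin i → List (ℝ × ℝ),
      (∀ j, IsBoundedPath Γ k (F j)) ∧ PairwiseVertexDisjoint F ∧
      x = ∑ j, pathWeight ε (F j) }

section

open Set

/-- The height at abscissa `x` of the line through `u` and `v`. -/
noncomputable def lineHeight (u v : ℝ × ℝ) (x : ℝ) : ℝ :=
  u.2 + (x - u.1) / (v.1 - u.1) * (v.2 - u.2)

/-- The height at abscissa `x` of the polygonal line with vertices `L`. -/
noncomputable def pathHeight : List (ℝ × ℝ) → ℝ → ℝ
  | [], _ => 0
  | [u], _ => u.2
  | u :: v :: L, x => if x ≤ v.1 then lineHeight u v x else pathHeight (v :: L) x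

/-- The abscissae of the list increase strictly. -/
abbrev IsRightward (L : List (ℝ × ℝ)) : Prop :=
  List.IsChain (fun u v : ℝ × ℝ => u.1 < v.1) L

lemma lineHeight_left (u v : ℝ × ℝ) : lineHeight u v u.1 = u.2 := by
  simp [lineHeight]

lemma lineHeight_right {u v : ℝ × ℝ} (h : u.1 < v.1) : lineHeight u v v.1 = v.2 := by
  have : v.1 - u.1 ≠ 0 := by linarith
  simp [lineHeight, this]

lemma lineHeight_mem_openSegment {u v : ℝ × ℝ} {x : ℝ} (h₁ : u.1 < x) (h₂ : x < v.1) :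
    (x, lineHeight u v x) ∈ openSegment ℝ u v := by
  have h : 0 < v.1 - u.1 := by linarith
  refine ⟨(v.1 - x) / (v.1 - u.1), (x - u.1) / (v.1 - u.1), div_pos (by linarith) h,
    div_pos (by linarith) h, ?_, ?_⟩
  · field_simp
    ring
  · ext
    · simp only [Prod.fst_add, Prod.smul_fst, smul_eq_mul]
      field_simp
      ring
    · simp only [Prod.snd_add, Prod.smul_snd, smul_eq_mul, lineHeight]
      field_simp
      ring

lemma pathHeight_head {u : ℝ × ℝ} {L : List (ℝ × ℝ)} (h : IsRightward (u :: L)) :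
    pathHeight (u :: L) u.1 = u.2 := by
  cases L with
  | nil => rfl
  | cons v L =>
    have huv : u.1 < v.1 := (List.isChain_cons_cons.1 h).1
    simp [pathHeight, huv.le, lineHeight_left]

lemma pathHeight_cons_of_le {u v : ℝ × ℝ} {L : List (ℝ × ℝ)} {x : ℝ}
    (hx : x ≤ v.1) : pathHeight (u :: v :: L) x = lineHeight u v x := by
  simp [pathHeight, hx]

lemma pathHeight_cons_of_ge {u v : ℝ × ℝ} {L : List (ℝ × ℝ)} {x : ℝ}
    (h : IsRightward (u :: v :: L)) (hx : v.1 ≤ x) :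
    pathHeight (u :: v :: L) x = pathHeight (v :: L) x := by
  obtain ⟨huv, hL⟩ := List.isChain_cons_cons.1 h
  rcases hx.eq_or_lt with rfl | hx
  · rw [pathHeight_cons_of_le le_rfl, lineHeight_right huv, pathHeight_head hL]
  · simp [pathHeight, hx.not_ge]

lemma continuous_pathHeight {L : List (ℝ × ℝ)} (h : IsRightward L) :
    Continuous (pathHeight L) := by
  induction L with
  | nil => exact continuous_const
  | cons u L ih =>
    cases L with
    | nil => exact continuous_const
    | cons v L =>
      obtain ⟨huv, hL⟩ := List.isChain_cons_cons.1 h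
      have hc : Continuous (lineHeight u v) := by
        unfold lineHeight
        fun_prop
      have : pathHeight (u :: v :: L) =
          fun x => if x ≤ v.1 then lineHeight u v x else pathHeight (v :: L) x := by
        funext x
        simp [pathHeight]
      rw [this]
      refine Continuous.if_le hc (ih hL) continuous_id continuous_const ?_
      rintro x rfl
      exact (lineHeight_right huv).trans (pathHeight_head hL).symm

lemma IsRightward.head_le {u v : ℝ × ℝ} {L : List (ℝ × ℝ)} (h : IsRightward (u :: L))
    (hv : v ∈ u :: L) : u.1 ≤ v.1 := by
  rcases List.mem_cons.1 hv with rfl | hv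
  · exact le_rfl
  · have hp : List.Pairwise (fun u v : ℝ × ℝ => u.1 < v.1) (u :: L) :=
      List.isChain_iff_pairwise.1 h
    exact ((List.pairwise_cons.1 hp).1 v hv).le

lemma pathHeight_append_of_ge {l₁ l₂ : List (ℝ × ℝ)} {v : ℝ × ℝ} {x : ℝ}
    (h : IsRightward (l₁ ++ v :: l₂)) (hx : v.1 ≤ x) :
    pathHeight (l₁ ++ v :: l₂) x = pathHeight (v :: l₂) x := by
  induction l₁ with
  | nil => rfl
  | cons u l₁ ih =>
    have hL : IsRightward (l₁ ++ v :: l₂) := h.tail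
    rw [← ih hL]
    cases l₁ with
    | nil => exact pathHeight_cons_of_ge h hx
    | cons w l₁ =>
      exact pathHeight_cons_of_ge h ((hL.head_le (by simp)).trans hx)

lemma pathHeight_append_of_le {l₁ l₂ : List (ℝ × ℝ)} {v : ℝ × ℝ} {x : ℝ}
    (h : IsRightward (l₁ ++ v :: l₂)) (h₀ : ∀ u ∈ (l₁ ++ [v]).head?, u.1 ≤ x) (hx : x ≤ v.1) :
    pathHeight (l₁ ++ v :: l₂) x = pathHeight (l₁ ++ [v]) x := by
  induction l₁ with
  | nil =>
    obtain rfl : x = v.1 := le_antisymm hx (h₀ v (by simp))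
    exact pathHeight_head h
  | cons u l₁ ih =>
    cases l₁ with
    | nil => simp [pathHeight, hx]
    | cons w l₁ =>
      have hL : IsRightward (w :: l₁ ++ v :: l₂) := h.tail
      by_cases hw : x ≤ w.1
      · simp [pathHeight, hw]
      · have := ih hL (by simpa using (not_le.1 hw).le)
        simpa [pathHeight, hw] using this

lemma pathHeight_of_mem {L : List (ℝ × ℝ)} {v : ℝ × ℝ} (h : IsRightward L) (hv : v ∈ L) :
    pathHeight L v.1 = v.2 := by
  obtain ⟨l₁, l₂, rfl⟩ := List.append_of_mem hv
  rw [pathHeight_append_of_ge h le_rfl]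
  exact pathHeight_head h.right_of_append

lemma mem_or_mem_openSegment_of_isRightward {L : List (ℝ × ℝ)} {p q : ℝ × ℝ} {x : ℝ}
    (h : IsRightward L) (hp : L.head? = some p) (hq : L.getLast? = some q)
    (hpx : p.1 ≤ x) (hxq : x ≤ q.1) :
    (x, pathHeight L x) ∈ L ∨ ∃ l₁ u v l₂, L = l₁ ++ u :: v :: l₂ ∧
      (x, pathHeight L x) ∈ openSegment ℝ u v := by
  induction L generalizing p with
  | nil => simp at hp
  | cons u L ih =>
    obtain rfl : u = p := by simpa using hp
    rcases hpx.eq_or_lt with rfl | hux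
    · left
      rw [pathHeight_head h]
      simp
    cases L with
    | nil =>
      obtain rfl : u = q := by simpa using hq
      exact absurd hux hxq.not_gt
    | cons v L =>
      rcases lt_or_ge x v.1 with hxv | hvx
      · right
        refine ⟨[], u, v, L, rfl, ?_⟩
        rw [pathHeight_cons_of_le hxv.le]
        exact lineHeight_mem_openSegment hux hxv
      · rw [pathHeight_cons_of_ge h hvx]
        rcases ih h.tail (p := v) rfl (by simpa using hq) hvx with h' | ⟨l₁, u', v', l₂, e, h'⟩
        · exact Or.inl (List.mem_cons_of_mem _ h')
        · exact Or.inr ⟨u :: l₁, u', v', l₂, by rw [e]; rfl, h'⟩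

lemma pathWeight_append {α : Type*} [AddCommMonoid α] (ε : (ℝ × ℝ) × (ℝ × ℝ) → α)
    (l₁ l₂ : List (ℝ × ℝ)) (v : ℝ × ℝ) :
    pathWeight ε (l₁ ++ v :: l₂) = pathWeight ε (l₁ ++ [v]) + pathWeight ε (v :: l₂) := by
  induction l₁ with
  | nil => simp [pathWeight]
  | cons u l₁ ih =>
    cases l₁ with
    | nil => simp [pathWeight]
    | cons w l₁ =>
      simp only [pathWeight, List.cons_append, List.tail_cons, List.zip_cons_cons,
        List.map_cons, List.sum_cons] at ih ⊢
      rw [ih, add_assoc]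

/-- `L` is a directed path of `Γ` whose abscissae go from `x₀` to `x₁`. -/
structure IsStripPath (Γ : PlanarNetwork) (x₀ x₁ : ℝ) (L : List (ℝ × ℝ)) : Prop where
  chain : List.IsChain (fun u v => (u, v) ∈ Γ.E) L
  mem_V : ∀ v ∈ L, v ∈ Γ.V
  head : ∃ p, L.head? = some p ∧ p.1 = x₀
  last : ∃ q, L.getLast? = some q ∧ q.1 = x₁

namespace IsStripPath

variable {Γ : PlanarNetwork} {x₀ x₁ : ℝ} {L p q : List (ℝ × ℝ)}

lemma isRightward (h : IsStripPath Γ x₀ x₁ L) : IsRightward L :=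
  h.chain.imp fun u v huv => (Γ.ends (u, v) huv).2.2

lemma split {l₁ l₂ : List (ℝ × ℝ)} {v : ℝ × ℝ} (h : IsStripPath Γ x₀ x₁ (l₁ ++ v :: l₂)) :
    IsStripPath Γ x₀ v.1 (l₁ ++ [v]) ∧ IsStripPath Γ v.1 x₁ (v :: l₂) := by
  obtain ⟨hc, hV, hh, hl⟩ := h
  obtain ⟨hc₁, hc₂⟩ := List.isChain_split.1 hc
  refine ⟨⟨hc₁, fun w hw => hV w ?_, ?_, ⟨v, by simp, rfl⟩⟩,
    ⟨hc₂, fun w hw => hV w ?_, ⟨v, rfl, rfl⟩, ?_⟩⟩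
  · simp only [List.mem_append, List.mem_cons] at hw ⊢
    tauto
  · cases l₁ <;> simpa using hh
  · exact List.mem_append_right _ hw
  · simpa [List.getLast?_append] using hl

lemma append {l₁ l₂ : List (ℝ × ℝ)} {v : ℝ × ℝ} (h₁ : IsStripPath Γ x₀ v.1 (l₁ ++ [v]))
    (h₂ : IsStripPath Γ v.1 x₁ (v :: l₂)) : IsStripPath Γ x₀ x₁ (l₁ ++ v :: l₂) := by
  refine ⟨List.isChain_split.2 ⟨h₁.chain, h₂.chain⟩, fun w hw => ?_, ?_, ?_⟩
  · rcases List.mem_append.1 hw with hw | hw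
    · exact h₁.mem_V w (List.mem_append_left _ hw)
    · exact h₂.mem_V w hw
  · have := h₁.head
    cases l₁ <;> simpa using this
  · simpa [List.getLast?_append] using h₂.last

lemma fst_mem_Icc (h : IsStripPath Γ x₀ x₁ L) {v : ℝ × ℝ} (hv : v ∈ L) :
    v.1 ∈ Icc x₀ x₁ := by
  obtain ⟨l₁, l₂, rfl⟩ := List.append_of_mem hv
  obtain ⟨h₁, h₂⟩ := h.split
  constructor
  · obtain ⟨u, hu, rfl⟩ := h₁.head
    cases l₁ with
    | nil =>
      obtain rfl : v = u := by simpa using hu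
      exact le_rfl
    | cons w l₁ =>
      obtain rfl : w = u := by simpa using hu
      exact h₁.isRightward.head_le (by simp)
  · obtain ⟨u, hu, rfl⟩ := h₂.last
    exact h₂.isRightward.head_le (List.mem_of_getLast? hu)

lemma head?_eq (h : IsStripPath Γ x₀ x₁ L) : L.head? = some (x₀, pathHeight L x₀) := by
  obtain ⟨u, hu, rfl⟩ := h.head
  rw [hu, pathHeight_of_mem h.isRightward (List.mem_of_head? hu)]

lemma getLast?_eq (h : IsStripPath Γ x₀ x₁ L) : L.getLast? = some (x₁, pathHeight L x₁) := by
  obtain ⟨u, hu, rfl⟩ := h.last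
  rw [hu, pathHeight_of_mem h.isRightward (List.mem_of_getLast? hu)]

/-- Two paths meet only at common vertices or along common edges. -/
lemma common_vertex_or_edge (hp : IsStripPath Γ x₀ x₁ p) (hq : IsStripPath Γ x₀ x₁ q)
    {x : ℝ} (hx : x ∈ Icc x₀ x₁) (h : pathHeight p x = pathHeight q x) :
    (∃ v ∈ p, v ∈ q ∧ v.1 = x) ∨
    ∃ u v l₁ l₂ r₁ r₂, p = l₁ ++ u :: v :: l₂ ∧ q = r₁ ++ u :: v :: r₂ := by
  have key : ∀ {L : List (ℝ × ℝ)}, IsStripPath Γ x₀ x₁ L →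
      (x, pathHeight L x) ∈ L ∨ ∃ l₁ u v l₂, L = l₁ ++ u :: v :: l₂ ∧ (u, v) ∈ Γ.E ∧
      (x, pathHeight L x) ∈ openSegment ℝ u v := by
    intro L hL
    rcases mem_or_mem_openSegment_of_isRightward hL.isRightward hL.head?_eq hL.getLast?_eq
      hx.1 hx.2 with h | ⟨l₁, u, v, l₂, e, h⟩
    · exact Or.inl h
    · have hc := hL.chain
      rw [e] at hc
      exact Or.inr ⟨l₁, u, v, l₂, e, (List.isChain_cons_cons.1 hc.right_of_append).1, h⟩
  rcases key hp with h₁ | ⟨l₁, u, v, l₂, e₁, huv, h₁⟩ <;>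
    rcases key hq with h₂ | ⟨r₁, u', v', r₂, e₂, huv', h₂⟩
  · exact Or.inl ⟨_, h₁, h ▸ h₂, rfl⟩
  · rw [← h] at h₂
    exact absurd h₂ (Γ.embedV _ huv' _ (hp.mem_V _ h₁))
  · rw [h] at h₁
    exact absurd h₁ (Γ.embedV _ huv _ (hq.mem_V _ h₂))
  · right
    by_cases e : (u, v) = (u', v')
    · obtain ⟨rfl, rfl⟩ := Prod.mk.inj e
      exact ⟨u, v, l₁, l₂, r₁, r₂, e₁, e₂⟩
    · rw [← h] at h₂
      exact absurd (openSegment_subset_segment ℝ _ _ h₂) (Γ.embed _ huv _ huv' e _ h₁)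

end IsStripPath

/-- A continuous function without zeros in the interior of an interval has constant weak sign. -/
lemma forall_le_or_forall_ge_of_ne {f g : ℝ → ℝ} {x₀ x₁ : ℝ} (hf : Continuous f)
    (hg : Continuous g) (h : ∀ x ∈ Ioo x₀ x₁, f x ≠ g x) :
    (∀ x ∈ Icc x₀ x₁, f x ≤ g x) ∨ ∀ x ∈ Icc x₀ x₁, g x ≤ f x := by
  by_contra! hcon
  obtain ⟨⟨x, hx, hfx⟩, y, hy, hfy⟩ := hcon
  have hc : ContinuousOn (fun z => f z - g z) (uIcc x y) := (hf.sub hg).continuousOn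
  obtain ⟨z, hz, hz0⟩ := intermediate_value_uIcc hc
    (show (0 : ℝ) ∈ uIcc (f x - g x) (f y - g y) by
      rw [mem_uIcc]; right; constructor <;> linarith)
  have hzx : z ≠ x := by rintro rfl; simp only at hz0; linarith
  have hzy : z ≠ y := by rintro rfl; simp only at hz0; linarith
  refine h z ?_ (by simp only at hz0; linarith)
  rcases mem_uIcc.1 hz with ⟨h₁, h₂⟩ | ⟨h₁, h₂⟩
  · exact ⟨hx.1.trans_lt (lt_of_le_of_ne h₁ hzx.symm), (lt_of_le_of_ne h₂ hzy).trans_le hy.2⟩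
  · exact ⟨hy.1.trans_lt (lt_of_le_of_ne h₁ hzy.symm), (lt_of_le_of_ne h₂ hzx).trans_le hx.2⟩

namespace IsStripPath

variable {Γ : PlanarNetwork} {x₀ x₁ : ℝ} {p q : List (ℝ × ℝ)}

lemma eq_pair {l₁ l₂ : List (ℝ × ℝ)} {u v : ℝ × ℝ}
    (h : IsStripPath Γ u.1 v.1 (l₁ ++ u :: v :: l₂)) : l₁ ++ u :: v :: l₂ = [u, v] := by
  have hpw : List.Pairwise (fun u v : ℝ × ℝ => u.1 < v.1) (l₁ ++ u :: v :: l₂) :=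
    List.isChain_iff_pairwise.1 h.isRightward
  have h₁ : l₁ = [] := by
    refine List.eq_nil_iff_forall_not_mem.2 fun w hw => ?_
    have := (List.pairwise_append.1 hpw).2.2 w hw u (by simp)
    have := (h.fst_mem_Icc (v := w) (by simp [hw])).1
    linarith
  have h₂ : l₂ = [] := by
    refine List.eq_nil_iff_forall_not_mem.2 fun w hw => ?_
    have := (List.pairwise_cons.1 (List.pairwise_cons.1 (List.pairwise_append.1 hpw).2.1).2).1 w hw
    have := (h.fst_mem_Icc (v := w) (by simp [hw])).2
    linarith
  subst h₁ h₂
  rfl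

/-- Two paths without common vertex strictly inside the strip do not cross. -/
lemma le_or_ge_of_no_common_vertex (hp : IsStripPath Γ x₀ x₁ p) (hq : IsStripPath Γ x₀ x₁ q)
    (h : ∀ v ∈ p, v ∈ q → v.1 ∉ Ioo x₀ x₁) :
    (∀ x ∈ Icc x₀ x₁, pathHeight p x ≤ pathHeight q x) ∨
      ∀ x ∈ Icc x₀ x₁, pathHeight q x ≤ pathHeight p x := by
  by_cases hpq : p = q
  · subst hpq
    exact Or.inl fun x _ => le_rfl
  refine forall_le_or_forall_ge_of_ne (continuous_pathHeight hp.isRightward)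
    (continuous_pathHeight hq.isRightward) fun x hx hxe => hpq ?_
  rcases hp.common_vertex_or_edge hq (Ioo_subset_Icc_self hx) hxe with
    ⟨v, hvp, hvq, rfl⟩ | ⟨u, v, l₁, l₂, r₁, r₂, rfl, rfl⟩
  · exact absurd hx (h v hvp hvq)
  · have huv : u.1 < v.1 :=
      (List.isChain_cons_cons.1 hp.isRightward.right_of_append).1
    have hu := hp.fst_mem_Icc (v := u) (by simp)
    have hv := hp.fst_mem_Icc (v := v) (by simp)
    have hu' := h u (by simp) (by simp)
    have hv' := h v (by simp) (by simp)
    have eu : x₀ = u.1 := by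
      by_contra hne
      exact hu' ⟨lt_of_le_of_ne hu.1 hne, huv.trans_le hv.2⟩
    have ev : x₁ = v.1 := by
      by_contra hne
      exact hv' ⟨hu.1.trans_lt huv, lt_of_le_of_ne hv.2 (Ne.symm hne)⟩
    subst eu ev
    rw [hp.eq_pair, hq.eq_pair]

/-- Gluing two paths at the abscissa of a vertex. -/
lemma exists_glue {α : Type*} [AddCommMonoid α] (ε : (ℝ × ℝ) × (ℝ × ℝ) → α) {x : ℝ}
    (hp : IsStripPath Γ x₀ x p) (hq : IsStripPath Γ x x₁ q)
    (h : pathHeight p x = pathHeight q x) :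
    ∃ L, IsStripPath Γ x₀ x₁ L ∧ (∀ y ∈ Icc x₀ x, pathHeight L y = pathHeight p y) ∧
      (∀ y ∈ Icc x x₁, pathHeight L y = pathHeight q y) ∧
      pathWeight ε L = pathWeight ε p + pathWeight ε q := by
  obtain ⟨v, hv, rfl⟩ := hp.last
  have hpv := pathHeight_of_mem hp.isRightward (List.mem_of_getLast? hv)
  have hqv := hq.head?_eq
  rw [← h, hpv] at hqv
  obtain ⟨l₁, rfl⟩ := List.getLast?_eq_some_iff.1 hv
  obtain ⟨l₂, rfl⟩ := List.head?_eq_some_iff.1 hqv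
  have hL := hp.append hq
  refine ⟨_, hL, fun y hy => pathHeight_append_of_le hL.isRightward ?_ hy.2,
    fun y hy => pathHeight_append_of_ge hL.isRightward hy.1, pathWeight_append ε l₁ l₂ v⟩
  intro u hu
  rw [hp.head?_eq] at hu
  obtain rfl := Option.some.inj hu
  exact hy.1

/-- The lower and upper envelopes of two paths are again paths, with the same total weight. -/
theorem exists_inf_sup {α : Type*} [AddCommMonoid α] (ε : (ℝ × ℝ) × (ℝ × ℝ) → α)
    (hp : IsStripPath Γ x₀ x₁ p) (hq : IsStripPath Γ x₀ x₁ q) :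
    ∃ m M, IsStripPath Γ x₀ x₁ m ∧ IsStripPath Γ x₀ x₁ M ∧
      (∀ x ∈ Icc x₀ x₁, pathHeight m x = min (pathHeight p x) (pathHeight q x)) ∧
      (∀ x ∈ Icc x₀ x₁, pathHeight M x = max (pathHeight p x) (pathHeight q x)) ∧
      pathWeight ε m + pathWeight ε M = pathWeight ε p + pathWeight ε q := by
  induction hN : p.length + q.length using Nat.strong_induction_on generalizing x₀ x₁ p q with
  | _ N ih =>
  subst hN
  by_cases h : ∀ v ∈ p, v ∈ q → v.1 ∉ Ioo x₀ x₁
  · rcases hp.le_or_ge_of_no_common_vertex hq h with h | h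
    · exact ⟨p, q, hp, hq, fun x hx => (min_eq_left (h x hx)).symm,
        fun x hx => (max_eq_right (h x hx)).symm, rfl⟩
    · exact ⟨q, p, hq, hp, fun x hx => (min_eq_right (h x hx)).symm,
        fun x hx => (max_eq_left (h x hx)).symm, add_comm _ _⟩
  · push Not at h
    obtain ⟨v, hvp, hvq, hv⟩ := h
    have hpv := pathHeight_of_mem hp.isRightward hvp
    have hqv := pathHeight_of_mem hq.isRightward hvq
    obtain ⟨p₁, p₂, rfl⟩ := List.append_of_mem hvp
    obtain ⟨q₁, q₂, rfl⟩ := List.append_of_mem hvq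
    obtain ⟨hp₁, hp₂⟩ := hp.split
    obtain ⟨hq₁, hq₂⟩ := hq.split
    have lp₁ : 0 < p₁.length := by
      refine List.length_pos_iff.2 ?_
      rintro rfl
      obtain ⟨u, hu, hu'⟩ := hp₁.head
      obtain rfl : v = u := by simpa using hu
      exact hv.1.ne' hu'
    have lp₂ : 0 < p₂.length := by
      refine List.length_pos_iff.2 ?_
      rintro rfl
      obtain ⟨u, hu, hu'⟩ := hp₂.last
      obtain rfl : v = u := by simpa using hu
      exact hv.2.ne hu'
    obtain ⟨m₁, M₁, hm₁, hM₁, em₁, eM₁, w₁⟩ := ih _ (by simp; omega) hp₁ hq₁ rfl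
    obtain ⟨m₂, M₂, hm₂, hM₂, em₂, eM₂, w₂⟩ := ih _ (by simp; omega) hp₂ hq₂ rfl
    have mem₁ : v.1 ∈ Icc x₀ v.1 := right_mem_Icc.2 hv.1.le
    have mem₂ : v.1 ∈ Icc v.1 x₁ := left_mem_Icc.2 hv.2.le
    have restr₁ : ∀ {l₁ l₂ : List (ℝ × ℝ)}, IsStripPath Γ x₀ x₁ (l₁ ++ v :: l₂) →
        ∀ x ∈ Icc x₀ v.1, pathHeight (l₁ ++ v :: l₂) x = pathHeight (l₁ ++ [v]) x := by
      intro l₁ l₂ h x hx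
      refine pathHeight_append_of_le h.isRightward ?_ hx.2
      intro u hu
      rw [h.split.1.head?_eq] at hu
      obtain rfl := Option.some.inj hu
      exact hx.1
    have restr₂ : ∀ {l₁ l₂ : List (ℝ × ℝ)}, IsStripPath Γ x₀ x₁ (l₁ ++ v :: l₂) →
        ∀ x ∈ Icc v.1 x₁, pathHeight (l₁ ++ v :: l₂) x = pathHeight (v :: l₂) x :=
      fun h x hx => pathHeight_append_of_ge h.isRightward hx.1
    rw [restr₁ hp _ mem₁] at hpv
    rw [restr₁ hq _ mem₁] at hqv
    have hpv₂ := pathHeight_head hp₂.isRightward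
    have hqv₂ := pathHeight_head hq₂.isRightward
    obtain ⟨m, hm, m_left, m_right, wm⟩ := exists_glue ε hm₁ hm₂
      (by rw [em₁ _ mem₁, em₂ _ mem₂, hpv, hqv, hpv₂, hqv₂])
    obtain ⟨M, hM, M_left, M_right, wM⟩ := exists_glue ε hM₁ hM₂
      (by rw [eM₁ _ mem₁, eM₂ _ mem₂, hpv, hqv, hpv₂, hqv₂])
    refine ⟨m, M, hm, hM, fun x hx => ?_, fun x hx => ?_, ?_⟩
    · rcases le_total x v.1 with hxv | hxv
      · have hx' : x ∈ Icc x₀ v.1 := ⟨hx.1, hxv⟩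
        rw [m_left x hx', em₁ x hx', restr₁ hp x hx', restr₁ hq x hx']
      · have hx' : x ∈ Icc v.1 x₁ := ⟨hxv, hx.2⟩
        rw [m_right x hx', em₂ x hx', restr₂ hp x hx', restr₂ hq x hx']
    · rcases le_total x v.1 with hxv | hxv
      · have hx' : x ∈ Icc x₀ v.1 := ⟨hx.1, hxv⟩
        rw [M_left x hx', eM₁ x hx', restr₁ hp x hx', restr₁ hq x hx']
      · have hx' : x ∈ Icc v.1 x₁ := ⟨hxv, hx.2⟩
        rw [M_right x hx', eM₂ x hx', restr₂ hp x hx', restr₂ hq x hx']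
    · rw [wm, wM, add_add_add_comm, w₁, w₂, pathWeight_append ε p₁ p₂, pathWeight_append ε q₁ q₂,
        add_add_add_comm]

end IsStripPath

/-- The path `p` runs strictly below the path `q` over the whole strip of `Γ`. -/
def RunsBelow (Γ : PlanarNetwork) (p q : List (ℝ × ℝ)) : Prop :=
  ∀ x ∈ Icc Γ.a Γ.b, pathHeight p x < pathHeight q x

lemma isBoundedPath_iff {Γ : PlanarNetwork} {k : ℕ} {L : List (ℝ × ℝ)} :
    IsBoundedPath Γ k L ↔ IsStripPath Γ Γ.a Γ.b L ∧
      pathHeight L Γ.a ≤ k ∧ pathHeight L Γ.b ≤ k := by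
  constructor
  · rintro ⟨p, q, ⟨-, hc, hp, hq⟩, hpa, hqb, hpk, hqk⟩
    have hV : ∀ v ∈ L, v ∈ Γ.V := by
      intro v hv
      obtain ⟨l₁, l₂, rfl⟩ := List.append_of_mem hv
      cases l₂ with
      | cons w l₂ =>
        exact (Γ.ends _ (List.isChain_cons_cons.1 (List.IsChain.right_of_append hc)).1).1
      | nil =>
        rcases l₁.eq_nil_or_concat with rfl | ⟨l, w, rfl⟩
        · obtain rfl : v = p := by simpa using hp
          obtain rfl : v = q := by simpa using hq
          exact absurd (hpa.symm.trans hqb) Γ.hab.ne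
        · have hc' : List.IsChain (fun u v => (u, v) ∈ Γ.E) (l ++ [w, v]) := by
            rwa [List.concat_eq_append, List.append_assoc] at hc
          exact (Γ.ends _ (List.isChain_cons_cons.1 hc'.right_of_append).1).2.1
    have h : IsStripPath Γ Γ.a Γ.b L := ⟨hc, hV, ⟨p, hp, hpa⟩, ⟨q, hq, hqb⟩⟩
    refine ⟨h, ?_, ?_⟩
    · rw [← hpa, pathHeight_of_mem h.isRightward (List.mem_of_head? hp)]
      exact hpk
    · rw [← hqb, pathHeight_of_mem h.isRightward (List.mem_of_getLast? hq)]
      exact hqk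
  · rintro ⟨h, ha, hb⟩
    exact ⟨_, _, ⟨by rintro rfl; simpa using h.head?_eq, h.chain, h.head?_eq, h.getLast?_eq⟩,
      rfl, rfl, ha, hb⟩

lemma RunsBelow.not_mem {Γ : PlanarNetwork} {p q : List (ℝ × ℝ)}
    (hp : IsStripPath Γ Γ.a Γ.b p) (hq : IsStripPath Γ Γ.a Γ.b q) (h : RunsBelow Γ p q)
    {v : ℝ × ℝ} (hvp : v ∈ p) : v ∉ q := by
  intro hvq
  have := h v.1 (hp.fst_mem_Icc hvp)
  rw [pathHeight_of_mem hp.isRightward hvp, pathHeight_of_mem hq.isRightward hvq] at this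
  exact this.false

/-- Of two vertex-disjoint paths, one runs below the other. -/
lemma IsStripPath.runsBelow_or_runsBelow {Γ : PlanarNetwork} {p q : List (ℝ × ℝ)}
    (hp : IsStripPath Γ Γ.a Γ.b p) (hq : IsStripPath Γ Γ.a Γ.b q) (h : ∀ v ∈ p, v ∉ q) :
    RunsBelow Γ p q ∨ RunsBelow Γ q p := by
  have hne : ∀ x ∈ Icc Γ.a Γ.b, pathHeight p x ≠ pathHeight q x := by
    intro x hx hxe
    rcases hp.common_vertex_or_edge hq hx hxe with
      ⟨v, hvp, hvq, -⟩ | ⟨u, v, l₁, l₂, r₁, r₂, rfl, rfl⟩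
    · exact h v hvp hvq
    · exact h u (by simp) (by simp)
  rcases forall_le_or_forall_ge_of_ne (continuous_pathHeight hp.isRightward)
    (continuous_pathHeight hq.isRightward) fun x hx => hne x (Ioo_subset_Icc_self hx) with h | h
  · exact Or.inl fun x hx => (h x hx).lt_of_ne (hne x hx)
  · exact Or.inr fun x hx => (h x hx).lt_of_ne (hne x hx).symm

/-- A family of source-to-sink paths of `Γ^{(k)}`, each running below the next ones. -/
structure IsSortedFamily (Γ : PlanarNetwork) (k : ℕ) {m : ℕ} (F : Fin m → List (ℝ × ℝ)) :
    Prop where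
  path : ∀ j, IsStripPath Γ Γ.a Γ.b (F j)
  le_left : ∀ j, pathHeight (F j) Γ.a ≤ k
  le_right : ∀ j, pathHeight (F j) Γ.b ≤ k
  below : ∀ i j, i < j → RunsBelow Γ (F i) (F j)

/-- Multipaths are the sorted families. -/
lemma mem_boundedWeights_iff {Γ : PlanarNetwork} {ε : (ℝ × ℝ) × (ℝ × ℝ) → ℝ} {i k : ℕ} {x : ℝ} :
    x ∈ boundedWeights Γ ε i k ↔
      ∃ F : Fin i → List (ℝ × ℝ), IsSortedFamily Γ k F ∧ x = ∑ j, pathWeight ε (F j) := by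
  constructor
  · rintro ⟨F, hF, hd, rfl⟩
    simp only [isBoundedPath_iff] at hF
    have ha : Γ.a ∈ Icc Γ.a Γ.b := left_mem_Icc.2 Γ.hab.le
    have hinj : Function.Injective fun j => pathHeight (F j) Γ.a := by
      intro j j' hjj'
      by_contra hne
      rcases (hF j).1.runsBelow_or_runsBelow (hF j').1 (hd j j' hne) with h | h
      · exact (h _ ha).ne hjj'
      · exact (h _ ha).ne' hjj'
    let σ := Tuple.sort fun j => pathHeight (F j) Γ.a
    have hmono : StrictMono ((fun j => pathHeight (F j) Γ.a) ∘ σ) :=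
      (Tuple.monotone_sort _).strictMono_of_injective (hinj.comp σ.injective)
    refine ⟨F ∘ σ, ⟨fun j => (hF _).1, fun j => (hF _).2.1, fun j => (hF _).2.2,
      fun j j' hjj' => ?_⟩, (Equiv.sum_comp σ fun j => pathWeight ε (F j)).symm⟩
    rcases (hF (σ j)).1.runsBelow_or_runsBelow (hF (σ j')).1
      (hd _ _ (σ.injective.ne hjj'.ne)) with h | h
    · exact h
    · exact absurd (h _ ha) (hmono hjj').not_gt
  · rintro ⟨F, hF, rfl⟩
    refine ⟨F, fun j => isBoundedPath_iff.2 ⟨hF.path j, hF.le_left j, hF.le_right j⟩,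
      fun j j' hne v hv => ?_, rfl⟩
    rcases lt_or_gt_of_ne hne with h | h
    · exact (hF.below _ _ h).not_mem (hF.path _) (hF.path _) hv
    · exact fun hv' => (hF.below _ _ h).not_mem (hF.path _) (hF.path _) hv' hv

namespace IsSortedFamily

variable {Γ : PlanarNetwork} {k m : ℕ}

/-- In a sorted family of `Γ^{(k+1)}`, the paths below another one lie in `Γ^{(k)}`. -/
lemma le_of_lt {n : ℕ} (hΓ : Γ.HasRank n) {F : Fin m → List (ℝ × ℝ)}
    (hF : IsSortedFamily Γ (k + 1) F) {j j' : Fin m} (h : j < j') :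
    pathHeight (F j) Γ.a ≤ k ∧ pathHeight (F j) Γ.b ≤ k := by
  have hlt := hF.below j j' h
  have hp := hF.path j
  constructor
  · obtain ⟨r, -, -, hr⟩ := hΓ.1 _ (hp.mem_V _ (List.mem_of_head? hp.head?_eq)) rfl
    have := (hlt _ (left_mem_Icc.2 Γ.hab.le)).trans_le (hF.le_left j')
    simp only at hr
    rw [hr] at this ⊢
    exact_mod_cast Nat.lt_succ_iff.1 (by exact_mod_cast this)
  · obtain ⟨r, -, -, hr⟩ := hΓ.2.1 _ (hp.mem_V _ (List.mem_of_getLast? hp.getLast?_eq)) rfl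
    have := (hlt _ (right_mem_Icc.2 Γ.hab.le)).trans_le (hF.le_right j')
    simp only at hr
    rw [hr] at this ⊢
    exact_mod_cast Nat.lt_succ_iff.1 (by exact_mod_cast this)

lemma cons {F : Fin m → List (ℝ × ℝ)} {p : List (ℝ × ℝ)} (hF : IsSortedFamily Γ k F)
    (hp : IsStripPath Γ Γ.a Γ.b p) (ha : pathHeight p Γ.a ≤ k) (hb : pathHeight p Γ.b ≤ k)
    (h : ∀ j, RunsBelow Γ p (F j)) :
    IsSortedFamily Γ k (Fin.cons p F : Fin (m + 1) → List (ℝ × ℝ)) := by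
  refine ⟨fun j => ?_, fun j => ?_, fun j => ?_, fun j j' hjj' => ?_⟩
  · cases j using Fin.cases <;> simp [hp, hF.path]
  · cases j using Fin.cases <;> simp [ha, hF.le_left]
  · cases j using Fin.cases <;> simp [hb, hF.le_right]
  · cases j' using Fin.cases with
    | zero => exact absurd hjj' (Fin.not_lt_zero j)
    | succ j' =>
      cases j using Fin.cases with
      | zero => simpa using h j'
      | succ j => simpa using hF.below j j' (by simpa using hjj')

lemma snoc {F : Fin m → List (ℝ × ℝ)} {p : List (ℝ × ℝ)} (hF : IsSortedFamily Γ k F)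
    (hp : IsStripPath Γ Γ.a Γ.b p) (ha : pathHeight p Γ.a ≤ k) (hb : pathHeight p Γ.b ≤ k)
    (h : ∀ j, RunsBelow Γ (F j) p) :
    IsSortedFamily Γ k (Fin.snoc F p : Fin (m + 1) → List (ℝ × ℝ)) := by
  refine ⟨fun j => ?_, fun j => ?_, fun j => ?_, fun j j' hjj' => ?_⟩
  · cases j using Fin.lastCases <;> simp [hp, hF.path]
  · cases j using Fin.lastCases <;> simp [ha, hF.le_left]
  · cases j using Fin.lastCases <;> simp [hb, hF.le_right]
  · cases j using Fin.lastCases with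
    | last => exact absurd hjj' (Fin.le_last j').not_gt
    | cast j =>
      cases j' using Fin.lastCases with
      | last => simpa using h j
      | cast j' => simpa using hF.below j j' (by simpa using hjj')

/-- The lower and upper envelopes, member by member, of two sorted families are sorted families,
and the lower one obeys the smaller of the two height bounds. -/
lemma exists_inf_sup {k₁ k₂ : ℕ} {A B : Fin m → List (ℝ × ℝ)} (hk : k₁ ≤ k₂)
    (ε : (ℝ × ℝ) × (ℝ × ℝ) → ℝ) (hA : IsSortedFamily Γ k₁ A) (hB : IsSortedFamily Γ k₂ B) :
    ∃ C D : Fin m → List (ℝ × ℝ), IsSortedFamily Γ k₁ C ∧ IsSortedFamily Γ k₂ D ∧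
      (∀ j, ∀ x ∈ Icc Γ.a Γ.b,
        pathHeight (C j) x = min (pathHeight (A j) x) (pathHeight (B j) x)) ∧
      (∀ j, ∀ x ∈ Icc Γ.a Γ.b,
        pathHeight (D j) x = max (pathHeight (A j) x) (pathHeight (B j) x)) ∧
      ∑ j, pathWeight ε (C j) + ∑ j, pathWeight ε (D j) =
        ∑ j, pathWeight ε (A j) + ∑ j, pathWeight ε (B j) := by
  choose C D hC hD eC eD w using fun j => (hA.path j).exists_inf_sup ε (hB.path j)
  have ha : Γ.a ∈ Icc Γ.a Γ.b := left_mem_Icc.2 Γ.hab.le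
  have hb : Γ.b ∈ Icc Γ.a Γ.b := right_mem_Icc.2 Γ.hab.le
  have hk' : (k₁ : ℝ) ≤ k₂ := by exact_mod_cast hk
  refine ⟨C, D, ⟨hC, fun j => ?_, fun j => ?_, fun j j' hjj' x hx => ?_⟩,
    ⟨hD, fun j => ?_, fun j => ?_, fun j j' hjj' x hx => ?_⟩, eC, eD, ?_⟩
  · rw [eC j _ ha]
    exact min_le_of_left_le (hA.le_left j)
  · rw [eC j _ hb]
    exact min_le_of_left_le (hA.le_right j)
  · rw [eC j x hx, eC j' x hx]
    exact min_lt_min (hA.below j j' hjj' x hx) (hB.below j j' hjj' x hx)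
  · rw [eD j _ ha]
    exact max_le ((hA.le_left j).trans hk') (hB.le_left j)
  · rw [eD j _ hb]
    exact max_le ((hA.le_right j).trans hk') (hB.le_right j)
  · rw [eD j x hx, eD j' x hx]
    exact max_lt_max (hA.below j j' hjj' x hx) (hB.below j j' hjj' x hx)
  · rw [← Finset.sum_add_distrib, ← Finset.sum_add_distrib]
    exact Finset.sum_congr rfl fun j _ => w j

lemma comp {l : ℕ} {F : Fin m → List (ℝ × ℝ)} (hF : IsSortedFamily Γ k F) {f : Fin l → Fin m}
    (hf : StrictMono f) : IsSortedFamily Γ k (F ∘ f) :=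
  ⟨fun _ => hF.path _, fun _ => hF.le_left _, fun _ => hF.le_right _,
    fun _ _ h => hF.below _ _ (hf h)⟩

/-- An `m`-multipath of `Γ^{(k+1)}` and an `(m+1)`-multipath of `Γ^{(k)}` can be recombined into
an `m`-multipath of `Γ^{(k)}` and an `(m+1)`-multipath of `Γ^{(k+1)}`. -/
lemma exists_exchange_bound (ε : (ℝ × ℝ) × (ℝ × ℝ) → ℝ) {A : Fin m → List (ℝ × ℝ)}
    {B : Fin (m + 1) → List (ℝ × ℝ)} (hA : IsSortedFamily Γ (k + 1) A)
    (hB : IsSortedFamily Γ k B) :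
    ∃ (C : Fin m → List (ℝ × ℝ)) (D : Fin (m + 1) → List (ℝ × ℝ)),
      IsSortedFamily Γ k C ∧ IsSortedFamily Γ (k + 1) D ∧
      ∑ j, pathWeight ε (C j) + ∑ j, pathWeight ε (D j) =
        ∑ j, pathWeight ε (A j) + ∑ j, pathWeight ε (B j) := by
  obtain ⟨C, D, hC, hD, -, eD, w⟩ :=
    exists_inf_sup k.le_succ ε (hB.comp (Fin.strictMono_succ (n := m))) hA
  have hk : (k : ℝ) ≤ (k + 1 : ℕ) := by exact_mod_cast k.le_succ
  refine ⟨C, Fin.cons (B 0) D, hC, hD.cons (hB.path 0) ((hB.le_left 0).trans hk)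
    ((hB.le_right 0).trans hk) fun j x hx => ?_, ?_⟩
  · rw [eD j x hx]
    exact lt_max_of_lt_left (hB.below _ _ (Fin.succ_pos j) x hx)
  · simp only [Fin.sum_univ_succ, Fin.cons_zero, Fin.cons_succ, Function.comp_apply] at w ⊢
    linarith

/-- An `(m+2)`-multipath of `Γ^{(k+1)}` and an `m`-multipath of `Γ^{(k)}` can be recombined into
`(m+1)`-multipaths of `Γ^{(k+1)}` and of `Γ^{(k)}`. -/
lemma exists_exchange_size {n : ℕ} (hΓ : Γ.HasRank n) (ε : (ℝ × ℝ) × (ℝ × ℝ) → ℝ)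
    {A : Fin (m + 2) → List (ℝ × ℝ)} {B : Fin m → List (ℝ × ℝ)}
    (hA : IsSortedFamily Γ (k + 1) A) (hB : IsSortedFamily Γ k B) :
    ∃ C D : Fin (m + 1) → List (ℝ × ℝ),
      IsSortedFamily Γ (k + 1) C ∧ IsSortedFamily Γ k D ∧
      ∑ j, pathWeight ε (C j) + ∑ j, pathWeight ε (D j) =
        ∑ j, pathWeight ε (A j) + ∑ j, pathWeight ε (B j) := by
  have hf : StrictMono fun j : Fin m => j.succ.castSucc :=
    (Fin.strictMono_castSucc).comp Fin.strictMono_succ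
  have hlast : ∀ j : Fin (m + 1), j.castSucc < Fin.last (m + 1) := Fin.castSucc_lt_last
  have hA' : IsSortedFamily Γ k (A ∘ fun j : Fin m => j.succ.castSucc) :=
    ⟨fun j => hA.path _, fun j => (hA.le_of_lt hΓ (hlast _)).1,
      fun j => (hA.le_of_lt hΓ (hlast _)).2, (hA.comp hf).below⟩
  obtain ⟨C, D, hC, hD, eC, eD, w⟩ := exists_inf_sup le_rfl ε hA' hB
  have hk : (k : ℝ) ≤ (k + 1 : ℕ) := by exact_mod_cast k.le_succ
  have hC' : IsSortedFamily Γ (k + 1) C :=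
    ⟨hC.path, fun j => (hC.le_left j).trans hk, fun j => (hC.le_right j).trans hk, hC.below⟩
  obtain ⟨h₀a, h₀b⟩ := hA.le_of_lt hΓ (hlast 0)
  refine ⟨Fin.snoc C (A (Fin.last _)), Fin.cons (A 0) D,
    hC'.snoc (hA.path _) (hA.le_left _) (hA.le_right _) fun j x hx => ?_,
    hD.cons (hA.path 0) h₀a h₀b fun j x hx => ?_, ?_⟩
  · rw [eC j x hx]
    exact min_lt_of_left_lt (hA.below _ _ (hlast _) x hx)
  · rw [eD j x hx]
    exact lt_max_of_lt_left (hA.below _ _ (Fin.castSucc_lt_castSucc_iff.2 (Fin.succ_pos j)) x hx)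
  · have hs : ∑ j, pathWeight ε (A j) = pathWeight ε (A 0) +
        ∑ j : Fin m, pathWeight ε (A j.succ.castSucc) + pathWeight ε (A (Fin.last _)) := by
      rw [Fin.sum_univ_castSucc, Fin.sum_univ_succ]
      rfl
    rw [Fin.sum_univ_castSucc, Fin.sum_univ_succ, hs]
    simp only [Fin.snoc_castSucc, Fin.snoc_last, Fin.cons_zero, Fin.cons_succ,
      Function.comp_apply] at w ⊢
    linarith

end IsSortedFamily

end

/-- Theorem `thm:GZ1`.  For a rank-`n` weighted planar
network `Γ`, the numbers `t i k = l_i Γ^{(k)} (ε)` — whenever they all exist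
(are finite), i.e. are greatest elements of the corresponding sets of
multipath weights — satisfy the `C₂` rhombus inequalities. -/
theorem networks_interlacing_hive (n : ℕ) (Γ : PlanarNetwork)
    (hΓ : Γ.HasRank n) (ε : (ℝ × ℝ) × (ℝ × ℝ) → ℝ) (t : ℕ → ℕ → ℝ)
    (ht : ∀ k, k ≤ n → ∀ i, i ≤ k → IsGreatest (boundedWeights Γ ε i k) (t i k)) :
    ∀ i k, 0 < i → i < k → k ≤ n →
      t i k + t (i - 1) (k - 1) ≥ t (i - 1) k + t i (k - 1) ∧
      t i k + t i (k - 1) ≥ t (i + 1) k + t (i - 1) (k - 1) := by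
  intro i k hi hik hkn
  obtain ⟨m, rfl⟩ : ∃ m, i = m + 1 := ⟨i - 1, by omega⟩
  obtain ⟨l, rfl⟩ : ∃ l, k = l + 1 := ⟨k - 1, by omega⟩
  simp only [Nat.add_sub_cancel]
  constructor
  · obtain ⟨A, hA, eA⟩ := mem_boundedWeights_iff.1 (ht (l + 1) hkn m (by omega)).1
    obtain ⟨B, hB, eB⟩ := mem_boundedWeights_iff.1 (ht l (by omega) (m + 1) (by omega)).1
    obtain ⟨C, D, hC, hD, w⟩ := hA.exists_exchange_bound ε hB
    have h₁ := (ht l (by omega) m (by omega)).2 (mem_boundedWeights_iff.2 ⟨C, hC, rfl⟩)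
    have h₂ := (ht (l + 1) hkn (m + 1) (by omega)).2 (mem_boundedWeights_iff.2 ⟨D, hD, rfl⟩)
    linarith
  · obtain ⟨A, hA, eA⟩ := mem_boundedWeights_iff.1 (ht (l + 1) hkn (m + 2) (by omega)).1
    obtain ⟨B, hB, eB⟩ := mem_boundedWeights_iff.1 (ht l (by omega) m (by omega)).1
    obtain ⟨C, D, hC, hD, w⟩ := hA.exists_exchange_size hΓ ε hB
    have h₁ := (ht (l + 1) hkn (m + 1) (by omega)).2 (mem_boundedWeights_iff.2 ⟨C, hC, rfl⟩)
    have h₂ := (ht l (by omega) (m + 1) (by omega)).2 (mem_boundedWeights_iff.2 ⟨D, hD, rfl⟩)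
    linarith
end

section
/- Hive inequalities for concatenated planar networks: let Γ and Δ be composable planar networks of rank n, and for 0 ≤ i ≤ k ≤ n and a real weighting ε of Γ∘Δ define m_i^k(ε) as the maximal total weight of a union of k pairwise disjoint paths in Γ from sources of Γ to sinks of Γ, of which i continue as pairwise disjoint paths in Δ to sinks of Δ. Then, whenever finite, these numbers satisfy all three families of hive (C_3) inequalities: m_i^k + m_{i-1}^{k-1} ≥ m_{i-1}^k + m_i^{k-1}, m_i^k + m_i^{k-1} ≥ m_{i+1}^k + m_{i-1}^{k-1}, and m_i^k + m_{i-1}^k ≥ m_i^{k+1} + m_{i-1}^{k-1}, for 0 < i ≤ k < n. -/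
open scoped BigOperators

/-- `Γ` and `Δ` are composable: the strip of `Δ` starts where that of `Γ`
ends, and the sources of `Δ` are among the sinks of `Γ`. -/
def Composable (Γ Δ : PlanarNetwork) : Prop :=
  Δ.a = Γ.b ∧ ∀ p ∈ Δ.V, p.1 = Δ.a → p ∈ Γ.V

/-- The set of total weights of `ΓΔ`-paths in `P_i^k`: unions of `k` pairwise
vertex-disjoint source-to-sink paths of `Γ`, of which `i` are continued by
pairwise vertex-disjoint source-to-sink paths of `Δ`. -/
def gdWeights (Γ Δ : PlanarNetwork) (ε : (ℝ × ℝ) × (ℝ × ℝ) → ℝ)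
    (i k : ℕ) : Set ℝ :=
  { x | ∃ (G : Fin k → List (ℝ × ℝ)) (D : Fin i → List (ℝ × ℝ)),
      (∀ j, IsThroughPath Γ (G j)) ∧ (∀ j, IsThroughPath Δ (D j)) ∧
      PairwiseVertexDisjoint G ∧ PairwiseVertexDisjoint D ∧
      (∀ j, ∃ m, (D j).head? = (G m).getLast?) ∧
      x = (∑ j, pathWeight ε (G j)) + (∑ j, pathWeight ε (D j)) }

namespace PathSystem

section Involutions

variable {H : Type*} {a b : Equiv.Perm H}

/-- The involutions `a` and `b` reflect the `b * a`-orbit of a fixed point of `b`. -/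
theorem involutions_reflect_orbit (ha : a * a = 1) (hb : b * b = 1) {x : H} (hx : b x = x) (n : ℤ) :
    b (((b * a) ^ n) x) = ((b * a) ^ (-n)) x ∧ a (((b * a) ^ n) x) = ((b * a) ^ (-n - 1)) x := by
  have hb' : b⁻¹ = b := inv_eq_of_mul_eq_one_left hb
  have ha' : a⁻¹ = a := inv_eq_of_mul_eq_one_left ha
  have hconj : b * (b * a) * b⁻¹ = (b * a)⁻¹ := by
    rw [mul_inv_rev, ha', hb', ← mul_assoc, hb, one_mul]
  have h1 : ∀ m : ℤ, b (((b * a) ^ m) x) = ((b * a) ^ (-m)) x := by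
    intro m
    have h := conj_zpow (i := m) (a := b) (b := b * a)
    rw [hconj, inv_zpow'] at h
    rw [h, Equiv.Perm.mul_apply, Equiv.Perm.mul_apply, hb', hx]
  refine ⟨h1 n, ?_⟩
  have h2 : a * (b * a) ^ n = b * (b * a) ^ (n + 1) := by
    rw [add_comm n 1, zpow_add, zpow_one, ← mul_assoc, ← mul_assoc, hb, one_mul]
  rw [← Equiv.Perm.mul_apply, h2, Equiv.Perm.mul_apply, h1]
  congr 2
  ring

open Classical in
theorem card_fixed_le_two_aux (ha : a * a = 1) (hb : b * b = 1) {A B : Finset H}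
    (hA : ∀ x ∈ A, a x = x) (hB : ∀ x ∈ B, b x = x)
    (hconn : ∀ O : Set H, (∀ x, a x ∈ O ↔ x ∈ O) → (∀ x, b x ∈ O ↔ x ∈ O) →
      ∀ x ∈ A ∪ B, x ∈ O → ∀ y ∈ A ∪ B, y ∈ O) (hne : B.Nonempty) :
    A.card + B.card ≤ 2 := by
  obtain ⟨x, hxB⟩ := hne
  have hx := hB x hxB
  have hst := involutions_reflect_orbit ha hb hx
  have haa : ∀ y, a (a y) = y := fun y => by rw [← Equiv.Perm.mul_apply, ha]; rfl
  have hbb : ∀ y, b (b y) = y := fun y => by rw [← Equiv.Perm.mul_apply, hb]; rfl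
  set p := b * a with hp
  have hall : ∀ y ∈ A ∪ B, ∃ n : ℤ, y = (p ^ n) x := by
    refine hconn {y | ∃ n : ℤ, y = (p ^ n) x} ?_ ?_ x (Finset.mem_union_right _ hxB) ⟨0, by simp⟩
    · have h : ∀ y, (∃ n : ℤ, y = (p ^ n) x) → ∃ n : ℤ, a y = (p ^ n) x := by
        rintro _ ⟨n, rfl⟩
        exact ⟨_, (hst n).2⟩
      exact fun y => ⟨fun hy => by simpa [haa] using h _ hy, h y⟩
    · have h : ∀ y, (∃ n : ℤ, y = (p ^ n) x) → ∃ n : ℤ, b y = (p ^ n) x := by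
        rintro _ ⟨n, rfl⟩
        exact ⟨_, (hst n).1⟩
      exact fun y => ⟨fun hy => by simpa [hbb] using h _ hy, h y⟩
  obtain ⟨N, hN⟩ : ∃ N : ℤ, ∀ m : ℤ, (p ^ m) x = x ↔ N ∣ m :=
    ⟨_, fun m => MulAction.zpow_smul_eq_iff_minimalPeriod_dvd (a := p) (b := x) (n := m)⟩
  have heq : ∀ m n : ℤ, (p ^ m) x = (p ^ n) x ↔ N ∣ m - n := by
    intro m n
    rw [← hN, sub_eq_neg_add, zpow_add, Equiv.Perm.mul_apply, zpow_neg, Equiv.Perm.inv_eq_iff_eq]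
  have hB' : ∀ y ∈ B, ∃ n : ℤ, y = (p ^ n) x ∧ N ∣ 2 * n := by
    intro y hy
    obtain ⟨n, rfl⟩ := hall y (Finset.mem_union_right _ hy)
    refine ⟨n, rfl, ?_⟩
    have h := hB _ hy
    rw [(hst n).1, eq_comm, heq] at h
    convert h using 1
    ring
  have hA' : ∀ y ∈ A, ∃ n : ℤ, y = (p ^ n) x ∧ N ∣ 2 * n + 1 := by
    intro y hy
    obtain ⟨n, rfl⟩ := hall y (Finset.mem_union_left _ hy)
    refine ⟨n, rfl, ?_⟩
    have h := hA _ hy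
    rw [(hst n).2, eq_comm, heq] at h
    convert h using 1
    ring
  rcases A.eq_empty_or_nonempty with hAe | ⟨z, hz⟩
  · have h1 : (B.erase x).card ≤ 1 := by
      rw [Finset.card_le_one]
      have hodd : ∀ y ∈ B.erase x, ∃ n r : ℤ, y = (p ^ n) x ∧ 2 * n = N * (2 * r + 1) := by
        intro y hy
        rw [Finset.mem_erase] at hy
        obtain ⟨n, hn, q, hq⟩ := hB' y hy.2
        rcases Int.even_or_odd' q with ⟨r, rfl | rfl⟩
        · refine absurd ?_ hy.1
          rw [hn, hN]
          exact ⟨r, by linarith⟩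
        · exact ⟨n, r, hn, hq⟩
      intro y hy y' hy'
      obtain ⟨n, r, rfl, h⟩ := hodd y hy
      obtain ⟨n', r', rfl, h'⟩ := hodd y' hy'
      rw [heq]
      exact ⟨r - r', by linarith⟩
    rw [Finset.card_erase_of_mem hxB] at h1
    rw [hAe, Finset.card_empty]
    omega
  · obtain ⟨n₀, -, hn₀⟩ := hA' z hz
    have hcop : IsCoprime N 2 := by
      obtain ⟨q, hq⟩ := hn₀
      exact ⟨q, -n₀, by linarith⟩
    have h1 : A.card ≤ 1 := by
      rw [Finset.card_le_one]
      intro y hy y' hy'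
      obtain ⟨n, rfl, h⟩ := hA' y hy
      obtain ⟨n', rfl, h'⟩ := hA' y' hy'
      rw [heq]
      refine hcop.dvd_of_dvd_mul_left ?_
      convert dvd_sub h h' using 1
      ring
    have h2 : B.card ≤ 1 := by
      have h3 : ∀ y ∈ B, y = x := by
        intro y hy
        obtain ⟨n, rfl, h⟩ := hB' y hy
        rw [hN]
        exact hcop.dvd_of_dvd_mul_left h
      rw [Finset.card_le_one]
      exact fun y hy y' hy' => (h3 y hy).trans (h3 y' hy').symm
    omega

open Classical in
/-- The fixed points of two involutions lying in one orbit of the group they generate number at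
most two, counted once for each of the two involutions. -/
theorem card_fixed_le_two (ha : a * a = 1) (hb : b * b = 1) {A B : Finset H}
    (hA : ∀ x ∈ A, a x = x) (hB : ∀ x ∈ B, b x = x)
    (hconn : ∀ O : Set H, (∀ x, a x ∈ O ↔ x ∈ O) → (∀ x, b x ∈ O ↔ x ∈ O) →
      ∀ x, x ∈ A ∨ x ∈ B → x ∈ O → ∀ y, y ∈ A ∨ y ∈ B → y ∈ O) :
    A.card + B.card ≤ 2 := by
  rcases B.eq_empty_or_nonempty with hBe | hne
  · rcases A.eq_empty_or_nonempty with hAe | hne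
    · simp [hAe, hBe]
    · rw [add_comm]
      refine card_fixed_le_two_aux hb ha hB hA (fun O h1 h2 x hx hxO y hy => ?_) hne
      rw [Finset.mem_union, or_comm] at hx hy
      exact hconn O h2 h1 x hx hxO y hy
  · refine card_fixed_le_two_aux ha hb hA hB (fun O h1 h2 x hx hxO y hy => ?_) hne
    rw [Finset.mem_union] at hx hy
    exact hconn O h1 h2 x hx hxO y hy

open Classical in
/-- If, inside `S`, the involution `a` has more fixed points than `b`, then this is so on some
orbit of the group generated by `a` and `b`, and that orbit carries at most two fixed points. -/
theorem exists_orbit (ha : a * a = 1) (hb : b * b = 1) {A B : Finset H}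
    (hA : ∀ x ∈ A, a x = x) (hB : ∀ x ∈ B, b x = x) (S : H → Prop)
    (h : (B.filter S).card < (A.filter S).card) :
    ∃ C : H → Prop, (∀ x, C (a x) ↔ C x) ∧ (∀ x, C (b x) ↔ C x) ∧
      ((B.filter C).filter S).card < ((A.filter C).filter S).card ∧
      (A.filter C).card + (B.filter C).card ≤ 2 := by
  let r : H → H → Prop := fun x y => y = a x ∨ y = b x
  let f : H → Quot r := Quot.mk r
  obtain ⟨q, hq⟩ : ∃ q : Quot r, ((B.filter S).filter (fun x => f x = q)).card <
      ((A.filter S).filter (fun x => f x = q)).card := by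
    by_contra! hcon
    refine absurd h (not_lt.2 ?_)
    rw [Finset.card_eq_sum_card_fiberwise (f := f) (t := (A ∪ B).image f)
        (s := A.filter S) (fun x hx => Finset.mem_coe.2 (Finset.mem_image_of_mem f
          (Finset.mem_union_left _ (Finset.mem_filter.1 hx).1))),
      Finset.card_eq_sum_card_fiberwise (f := f) (t := (A ∪ B).image f)
        (s := B.filter S) (fun x hx => Finset.mem_coe.2 (Finset.mem_image_of_mem f
          (Finset.mem_union_right _ (Finset.mem_filter.1 hx).1)))]
    exact Finset.sum_le_sum fun q _ => hcon q
  have hfa : ∀ x, f (a x) = f x := fun x => (Quot.sound (r := r) (Or.inl rfl)).symm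
  have hfb : ∀ x, f (b x) = f x := fun x => (Quot.sound (r := r) (Or.inr rfl)).symm
  refine ⟨fun x => f x = q, fun x => by simp only [hfa], fun x => by simp only [hfb], ?_, ?_⟩
  · rwa [Finset.filter_comm, Finset.filter_comm (s := A)]
  · refine card_fixed_le_two ha hb (fun x hx => hA x (Finset.mem_filter.1 hx).1)
      (fun x hx => hB x (Finset.mem_filter.1 hx).1) ?_
    intro O hOa hOb x hx hxO y hy
    have hlift : ∀ x y, r x y → (x ∈ O) = (y ∈ O) := by
      rintro x y (rfl | rfl)
      · exact propext (hOa x).symm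
      · exact propext (hOb x).symm
    have hx' : f x = q := hx.elim (fun h => (Finset.mem_filter.1 h).2)
      (fun h => (Finset.mem_filter.1 h).2)
    have hy' : f y = q := hy.elim (fun h => (Finset.mem_filter.1 h).2)
      (fun h => (Finset.mem_filter.1 h).2)
    have hxy : Quot.lift (· ∈ O) hlift (f x) = Quot.lift (· ∈ O) hlift (f y) := by
      rw [hx', hy']
    exact hxy.mp hxO

end Involutions

section Exchange

open scoped Classical

variable {V : Type*}

/-- A finite set of directed edges in which every vertex has at most one outgoing and at most one
incoming edge. -/
structure IsSystem (R : Finset (V × V)) : Prop where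
  fst_inj : ∀ e ∈ R, ∀ f ∈ R, e.1 = f.1 → e = f
  snd_inj : ∀ e ∈ R, ∀ f ∈ R, e.2 = f.2 → e = f

/-- The tails of the edges of `R`. -/
noncomputable def dom (R : Finset (V × V)) : Finset V := R.image Prod.fst

/-- The heads of the edges of `R`. -/
noncomputable def ran (R : Finset (V × V)) : Finset V := R.image Prod.snd

/-- The vertices at which the paths formed by the edges of `R` start. -/
noncomputable def starts (R : Finset (V × V)) : Finset V := dom R \ ran R

/-- The vertices at which the paths formed by the edges of `R` end. -/
noncomputable def ends (R : Finset (V × V)) : Finset V := ran R \ dom R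

variable {R X Y : Finset (V × V)} {u v w : V}

theorem mem_dom : u ∈ dom R ↔ ∃ v, (u, v) ∈ R := by simp [dom]

theorem mem_ran : v ∈ ran R ↔ ∃ u, (u, v) ∈ R := by simp [ran]

theorem fst_mem_dom {e : V × V} (he : e ∈ R) : e.1 ∈ dom R := mem_dom.2 ⟨e.2, he⟩

theorem snd_mem_ran {e : V × V} (he : e ∈ R) : e.2 ∈ ran R := mem_ran.2 ⟨e.1, he⟩

theorem mem_starts : v ∈ starts R ↔ v ∈ dom R ∧ v ∉ ran R := Finset.mem_sdiff

theorem mem_ends : v ∈ ends R ↔ v ∈ ran R ∧ v ∉ dom R := Finset.mem_sdiff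

theorem IsSystem.subset (hR : IsSystem R) (h : X ⊆ R) : IsSystem X :=
  ⟨fun e he f hf => hR.fst_inj e (h he) f (h hf), fun e he f hf => hR.snd_inj e (h he) f (h hf)⟩

theorem IsSystem.card_starts (hR : IsSystem R) : (starts R).card = (ends R).card := by
  have h1 : (dom R).card = R.card :=
    Finset.card_image_of_injOn fun e he f hf h => hR.fst_inj e he f hf h
  have h2 : (ran R).card = R.card :=
    Finset.card_image_of_injOn fun e he f hf h => hR.snd_inj e he f hf h
  have h3 := Finset.card_sdiff_add_card_inter (dom R) (ran R)
  have h4 := Finset.card_sdiff_add_card_inter (ran R) (dom R)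
  rw [Finset.inter_comm] at h4
  unfold starts ends
  omega

/-- Split every vertex `v` into an outgoing half `(v, true)` and an incoming half `(v, false)`.
This involution matches the two halves of every edge of `R` and the two halves of every vertex
not met by `R`, and fixes the other halves. -/
noncomputable def mate (R : Finset (V × V)) : V × Bool → V × Bool
  | (v, true) => if h : ∃ w, (v, w) ∈ R then (h.choose, false)
      else if v ∈ ran R then (v, true) else (v, false)
  | (v, false) => if h : ∃ u, (u, v) ∈ R then (h.choose, true)
      else if v ∈ dom R then (v, false) else (v, true)

theorem IsSystem.mate_tail (hR : IsSystem R) (h : (u, v) ∈ R) : mate R (u, true) = (v, false) := by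
  have h' : ∃ w, (u, w) ∈ R := ⟨v, h⟩
  have := hR.fst_inj _ h'.choose_spec _ h rfl
  rw [mate, dif_pos h']
  exact congrArg (fun e => (e.2, false)) this

theorem IsSystem.mate_head (hR : IsSystem R) (h : (u, v) ∈ R) : mate R (v, false) = (u, true) := by
  have h' : ∃ w, (w, v) ∈ R := ⟨u, h⟩
  have := hR.snd_inj _ h'.choose_spec _ h rfl
  rw [mate, dif_pos h']
  exact congrArg (fun e => (e.1, true)) this

theorem mate_true_of_notMem (h1 : v ∉ dom R) (h2 : v ∉ ran R) : mate R (v, true) = (v, false) := by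
  rw [mem_dom] at h1
  rw [mate, dif_neg h1, if_neg h2]

theorem mate_false_of_notMem (h1 : v ∉ dom R) (h2 : v ∉ ran R) : mate R (v, false) = (v, true) := by
  rw [mem_ran] at h2
  rw [mate, dif_neg h2, if_neg h1]

theorem mate_of_mem_ends (h : v ∈ ends R) : mate R (v, true) = (v, true) := by
  rw [mem_ends] at h
  rw [mate, dif_neg (mem_dom.not.1 h.2), if_pos h.1]

theorem mate_of_mem_starts (h : v ∈ starts R) : mate R (v, false) = (v, false) := by
  rw [mem_starts] at h
  rw [mate, dif_neg (mem_ran.not.1 h.2), if_pos h.1]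

theorem IsSystem.mate_mate (hR : IsSystem R) (x : V × Bool) : mate R (mate R x) = x := by
  obtain ⟨v, _ | _⟩ := x
  · by_cases h2 : v ∈ ran R
    · obtain ⟨u, hu⟩ := mem_ran.1 h2
      rw [hR.mate_head hu, hR.mate_tail hu]
    · by_cases h1 : v ∈ dom R
      · rw [mate_of_mem_starts (mem_starts.2 ⟨h1, h2⟩), mate_of_mem_starts (mem_starts.2 ⟨h1, h2⟩)]
      · rw [mate_false_of_notMem h1 h2, mate_true_of_notMem h1 h2]
  · by_cases h1 : v ∈ dom R
    · obtain ⟨w, hw⟩ := mem_dom.1 h1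
      rw [hR.mate_tail hw, hR.mate_head hw]
    · by_cases h2 : v ∈ ran R
      · rw [mate_of_mem_ends (mem_ends.2 ⟨h2, h1⟩), mate_of_mem_ends (mem_ends.2 ⟨h2, h1⟩)]
      · rw [mate_true_of_notMem h1 h2, mate_false_of_notMem h1 h2]

/-- `mate` as a permutation. -/
noncomputable def matePerm (hR : IsSystem R) : Equiv.Perm (V × Bool) :=
  Function.Involutive.toPerm (mate R) hR.mate_mate

theorem matePerm_mul_self (hR : IsSystem R) : matePerm hR * matePerm hR = 1 :=
  Equiv.ext hR.mate_mate

/-- A set of halves compatible with `mate R`. -/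
structure IsClosedUnder (C : V × Bool → Prop) (R : Finset (V × V)) : Prop where
  edge : ∀ u v, (u, v) ∈ R → (C (u, true) ↔ C (v, false))
  unused : ∀ v, v ∉ dom R → v ∉ ran R → (C (v, true) ↔ C (v, false))

theorem IsSystem.isClosedUnder (hR : IsSystem R) {C : V × Bool → Prop}
    (hC : ∀ x, C (mate R x) ↔ C x) : IsClosedUnder C R where
  edge u v h := by rw [← hC (u, true), hR.mate_tail h]
  unused v h1 h2 := by rw [← hC (v, true), mate_true_of_notMem h1 h2]

variable {C : V × Bool → Prop}

/-- The edge set that agrees with `Y` on `C` and with `X` off `C`. -/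
noncomputable def splice (C : V × Bool → Prop) (X Y : Finset (V × V)) : Finset (V × V) :=
  X.filter (fun e => ¬ C (e.1, true)) ∪ Y.filter (fun e => C (e.1, true))

theorem mem_splice {e : V × V} :
    e ∈ splice C X Y ↔ (e ∈ X ∧ ¬ C (e.1, true)) ∨ (e ∈ Y ∧ C (e.1, true)) := by
  simp [splice]

theorem mem_dom_splice :
    v ∈ dom (splice C X Y) ↔ (¬ C (v, true) ∧ v ∈ dom X) ∨ (C (v, true) ∧ v ∈ dom Y) := by
  simp only [mem_dom, mem_splice]
  by_cases h : C (v, true) <;> simp [h]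

theorem mem_ran_splice (hX : IsClosedUnder C X) (hY : IsClosedUnder C Y) :
    v ∈ ran (splice C X Y) ↔ (¬ C (v, false) ∧ v ∈ ran X) ∨ (C (v, false) ∧ v ∈ ran Y) := by
  simp only [mem_ran, mem_splice]
  constructor
  · rintro ⟨u, ⟨h1, h2⟩ | ⟨h1, h2⟩⟩
    · exact Or.inl ⟨by rwa [← hX.edge _ _ h1], u, h1⟩
    · exact Or.inr ⟨by rwa [← hY.edge _ _ h1], u, h1⟩
  · rintro (⟨h2, u, h1⟩ | ⟨h2, u, h1⟩)
    · exact ⟨u, Or.inl ⟨h1, by rwa [hX.edge _ _ h1]⟩⟩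
    · exact ⟨u, Or.inr ⟨h1, by rwa [hY.edge _ _ h1]⟩⟩

theorem isSystem_splice (hX : IsSystem X) (hY : IsSystem Y) (hCX : IsClosedUnder C X)
    (hCY : IsClosedUnder C Y) : IsSystem (splice C X Y) := by
  constructor
  · intro e he f hf h
    rw [mem_splice] at he hf
    rw [h] at he
    have := hX.fst_inj e
    have := hY.fst_inj e
    grind
  · rintro ⟨u, v⟩ he ⟨u', v'⟩ hf (rfl : v = v')
    rw [mem_splice] at he hf
    have := hX.snd_inj (u, v)
    have := hY.snd_inj (u, v)
    have := hCX.edge u v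
    have := hCY.edge u v
    have := hCX.edge u' v
    have := hCY.edge u' v
    grind

theorem mem_ends_splice (hCX : IsClosedUnder C X) (hCY : IsClosedUnder C Y)
    (hXY : Disjoint (starts X) (ends Y)) (hYX : Disjoint (starts Y) (ends X)) :
    v ∈ ends (splice C X Y) ↔ (¬ C (v, true) ∧ v ∈ ends X) ∨ (C (v, true) ∧ v ∈ ends Y) := by
  have h1 : v ∈ starts X → v ∉ ends Y := fun h => Finset.disjoint_left.1 hXY h
  have h2 : v ∈ starts Y → v ∉ ends X := fun h => Finset.disjoint_left.1 hYX h
  have h3 := hCX.unused v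
  have h4 := hCY.unused v
  rw [mem_starts, mem_ends] at h1 h2
  rw [mem_ends, mem_ends, mem_ends, mem_dom_splice, mem_ran_splice hCX hCY]
  grind

theorem mem_starts_splice (hCX : IsClosedUnder C X) (hCY : IsClosedUnder C Y)
    (hXY : Disjoint (starts X) (ends Y)) (hYX : Disjoint (starts Y) (ends X)) :
    v ∈ starts (splice C X Y) ↔
      (¬ C (v, false) ∧ v ∈ starts X) ∨ (C (v, false) ∧ v ∈ starts Y) := by
  have h1 : v ∈ starts X → v ∉ ends Y := fun h => Finset.disjoint_left.1 hXY h
  have h2 : v ∈ starts Y → v ∉ ends X := fun h => Finset.disjoint_left.1 hYX h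
  have h3 := hCX.unused v
  have h4 := hCY.unused v
  rw [mem_starts, mem_ends] at h1 h2
  rw [mem_starts, mem_starts, mem_starts, mem_dom_splice, mem_ran_splice hCX hCY]
  grind

theorem sum_splice (ε : V × V → ℝ) :
    ∑ e ∈ splice C X Y, ε e =
      ∑ e ∈ X with ¬ C (e.1, true), ε e + ∑ e ∈ Y with C (e.1, true), ε e := by
  refine Finset.sum_union (Finset.disjoint_left.2 fun e h1 h2 => ?_)
  exact (Finset.mem_filter.1 h1).2 (Finset.mem_filter.1 h2).2

theorem sum_splice_add_sum_splice (ε : V × V → ℝ) :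
    ∑ e ∈ splice C X Y, ε e + ∑ e ∈ splice C Y X, ε e = ∑ e ∈ X, ε e + ∑ e ∈ Y, ε e := by
  rw [sum_splice, sum_splice, ← Finset.sum_filter_add_sum_filter_not X (fun e => C (e.1, true)),
    ← Finset.sum_filter_add_sum_filter_not Y (fun e => C (e.1, true))]
  ring

/-- The number of endpoints of `R` satisfying `U`. -/
noncomputable def numEnds (R : Finset (V × V)) (U : V → Prop) : ℕ := ((ends R).filter U).card

theorem numEnds_splice (hCX : IsClosedUnder C X) (hCY : IsClosedUnder C Y)
    (hXY : Disjoint (starts X) (ends Y)) (hYX : Disjoint (starts Y) (ends X)) (U : V → Prop) :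
    numEnds (splice C X Y) U + (((ends X).filter (fun v => C (v, true))).filter U).card =
      numEnds X U + (((ends Y).filter (fun v => C (v, true))).filter U).card := by
  have h : (ends (splice C X Y)).filter U =
      ((ends X).filter U).filter (fun v => ¬ C (v, true)) ∪
        ((ends Y).filter (fun v => C (v, true))).filter U := by
    ext v
    simp only [Finset.mem_filter, Finset.mem_union, mem_ends_splice hCX hCY hXY hYX]
    tauto
  rw [numEnds, numEnds, h, Finset.card_union_of_disjoint,
    ← Finset.card_filter_add_card_filter_not (s := (ends X).filter U) (fun v => C (v, true)),
    Finset.filter_comm (s := ends X) (p := U)]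
  · ring
  · refine Finset.disjoint_left.2 fun v h1 h2 => ?_
    simp only [Finset.mem_filter] at h1 h2
    exact h1.2 h2.1.2

theorem card_starts_splice (hCX : IsClosedUnder C X) (hCY : IsClosedUnder C Y)
    (hXY : Disjoint (starts X) (ends Y)) (hYX : Disjoint (starts Y) (ends X)) :
    (starts (splice C X Y)).card + ((starts X).filter (fun v => C (v, false))).card =
      (starts X).card + ((starts Y).filter (fun v => C (v, false))).card := by
  have h : starts (splice C X Y) =
      (starts X).filter (fun v => ¬ C (v, false)) ∪
        (starts Y).filter (fun v => C (v, false)) := by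
    ext v
    simp only [Finset.mem_filter, Finset.mem_union, mem_starts_splice hCX hCY hXY hYX]
    tauto
  rw [h, Finset.card_union_of_disjoint,
    ← Finset.card_filter_add_card_filter_not (s := starts X) (fun v => C (v, false))]
  · ring
  · refine Finset.disjoint_left.2 fun v h1 h2 => ?_
    simp only [Finset.mem_filter] at h1 h2
    exact h1.2 h2.2

/-- The fixed halves of `mate R` belonging to starting points and endpoints of `R`. -/
noncomputable def looseHalves (R : Finset (V × V)) : Finset (V × Bool) :=
  (starts R).image (fun v => (v, false)) ∪ (ends R).image (fun v => (v, true))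

theorem mate_of_mem_looseHalves {x : V × Bool} (hx : x ∈ looseHalves R) : mate R x = x := by
  simp only [looseHalves, Finset.mem_union, Finset.mem_image] at hx
  rcases hx with ⟨v, hv, rfl⟩ | ⟨v, hv, rfl⟩
  · exact mate_of_mem_starts hv
  · exact mate_of_mem_ends hv

theorem card_looseHalves_filter (C : V × Bool → Prop) [DecidablePred C] :
    ((looseHalves R).filter C).card = ((starts R).filter (fun v => C (v, false))).card +
      ((ends R).filter (fun v => C (v, true))).card := by
  rw [looseHalves, Finset.filter_union, Finset.card_union_of_disjoint, Finset.filter_image,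
    Finset.filter_image, Finset.card_image_of_injective _ (Prod.mk_left_injective _),
    Finset.card_image_of_injective _ (Prod.mk_left_injective _)]
  simp only [Finset.disjoint_left, Finset.mem_filter, Finset.mem_image]
  rintro _ ⟨⟨v, -, rfl⟩, -⟩ ⟨⟨w, -, h⟩, -⟩
  simp at h

/-- Exchange property of systems of disjoint paths: if `X` has more endpoints in `S` than `Y`, then
an endpoint `x ∈ S` of `X` can be moved to `Y`, possibly in exchange for an endpoint of `Y` outside
`S`. -/
theorem IsSystem.exchange (hX : IsSystem X) (hY : IsSystem Y)
    (hXY : Disjoint (starts X) (ends Y)) (hYX : Disjoint (starts Y) (ends X)) (S : V → Prop)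
    (hS : numEnds Y S < numEnds X S) :
    ∃ X' Y' : Finset (V × V), IsSystem X' ∧ IsSystem Y' ∧
      (∀ e ∈ X', e ∈ X ∨ e ∈ Y) ∧ (∀ e ∈ Y', e ∈ X ∨ e ∈ Y) ∧
      (∀ v ∈ starts X', v ∈ starts X ∨ v ∈ starts Y) ∧
      (∀ v ∈ starts Y', v ∈ starts X ∨ v ∈ starts Y) ∧
      (∀ v ∈ ends X', v ∈ ends X ∨ v ∈ ends Y) ∧ (∀ v ∈ ends Y', v ∈ ends X ∨ v ∈ ends Y) ∧
      (∀ ε : V × V → ℝ,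
        ∑ e ∈ X', ε e + ∑ e ∈ Y', ε e = ∑ e ∈ X, ε e + ∑ e ∈ Y, ε e) ∧
      ∃ x ∈ ends X, S x ∧
        ((∀ U : V → Prop, numEnds X' U + (if U x then 1 else 0) = numEnds X U ∧
            numEnds Y' U = numEnds Y U + (if U x then 1 else 0)) ∨
          ∃ y ∈ ends Y, ¬ S y ∧ ∀ U : V → Prop,
            numEnds X' U + (if U x then 1 else 0) = numEnds X U + (if U y then 1 else 0) ∧
            numEnds Y' U + (if U y then 1 else 0) = numEnds Y U + (if U x then 1 else 0)) := by
  obtain ⟨S', hS'⟩ : ∃ S' : V × Bool → Prop, ∀ z, S' z ↔ z.2 = true ∧ S z.1 :=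
    ⟨_, fun _ => Iff.rfl⟩
  have hcount : ∀ R : Finset (V × V), ((looseHalves R).filter S').card = numEnds R S := by
    intro R
    rw [card_looseHalves_filter]
    simp [numEnds, hS']
  obtain ⟨C, hCa, hCb, hlt, hle⟩ := exists_orbit (matePerm_mul_self hX) (matePerm_mul_self hY)
    (A := looseHalves X) (B := looseHalves Y) (fun x hx => mate_of_mem_looseHalves hx)
    (fun x hx => mate_of_mem_looseHalves hx) S'
    (by rwa [hcount, hcount])
  have hCX : IsClosedUnder C X := hX.isClosedUnder hCa
  have hCY : IsClosedUnder C Y := hY.isClosedUnder hCb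
  have hX' := isSystem_splice hX hY hCX hCY
  have hY' := isSystem_splice hY hX hCY hCX
  set p := (ends X).filter (fun v => C (v, true)) with hp
  set q := (ends Y).filter (fun v => C (v, true)) with hq
  have hcount' : ∀ R : Finset (V × V),
      (((looseHalves R).filter C).filter S').card =
        (((ends R).filter (fun v => C (v, true))).filter S).card := by
    intro R
    rw [Finset.filter_filter, card_looseHalves_filter, Finset.filter_filter]
    simp [hS']
  rw [hcount', hcount', ← hp, ← hq] at hlt
  rw [card_looseHalves_filter, card_looseHalves_filter, ← hp, ← hq] at hle
  have hcX := numEnds_splice hCX hCY hXY hYX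
  have hcY := numEnds_splice hCY hCX hYX hXY
  rw [← hp, ← hq] at hcX hcY
  have hbal : ((starts X).filter (fun v => C (v, false))).card + q.card =
      ((starts Y).filter (fun v => C (v, false))).card + p.card := by
    have h1 := card_starts_splice hCX hCY hXY hYX
    have h2 := hcX (fun _ => True)
    simp only [numEnds, Finset.filter_true] at h2
    rw [hX'.card_starts, hX.card_starts] at h1
    omega
  obtain ⟨x, hx⟩ : (p.filter S).Nonempty := Finset.card_pos.1 (by omega)
  have hxS := (Finset.mem_filter.1 hx).2
  have hxp := (Finset.mem_filter.1 hx).1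
  have hp1 : 1 ≤ p.card := Finset.card_pos.2 ⟨x, hxp⟩
  have hp2 : p = {x} := by
    have : p.card = 1 := by omega
    obtain ⟨z, hz⟩ := Finset.card_eq_one.1 this
    rw [hz, Finset.mem_singleton] at hxp
    rw [hz, hxp]
  have hpS : p.filter S = {x} := by rw [hp2, Finset.filter_singleton, if_pos hxS]
  rw [hpS, Finset.card_singleton] at hlt
  have hsing : ∀ (z : V) (U : V → Prop),
      (Finset.filter U {z}).card = if U z then 1 else 0 := by
    intro z U
    rw [Finset.filter_singleton]
    split_ifs <;> simp
  refine ⟨splice C X Y, splice C Y X, hX', hY', ?_, ?_, ?_, ?_, ?_, ?_,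
    fun ε => sum_splice_add_sum_splice ε, x, (Finset.mem_filter.1 hxp).1, hxS, ?_⟩
  · intro e he
    rw [mem_splice] at he
    tauto
  · intro e he
    rw [mem_splice] at he
    tauto
  · intro v hv
    rw [mem_starts_splice hCX hCY hXY hYX] at hv
    tauto
  · intro v hv
    rw [mem_starts_splice hCY hCX hYX hXY] at hv
    tauto
  · intro v hv
    rw [mem_ends_splice hCX hCY hXY hYX] at hv
    tauto
  · intro v hv
    rw [mem_ends_splice hCY hCX hYX hXY] at hv
    tauto
  · rcases q.eq_empty_or_nonempty with hqe | ⟨y, hy⟩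
    · left
      intro U
      have h1 := hcX U
      have h2 := hcY U
      rw [hp2, hqe, hsing, Finset.filter_empty, Finset.card_empty] at h1 h2
      exact ⟨h1, h2⟩
    · right
      have hq2 : q = {y} := by
        have h1 : 1 ≤ q.card := Finset.card_pos.2 ⟨y, hy⟩
        have : q.card = 1 := by omega
        obtain ⟨z, hz⟩ := Finset.card_eq_one.1 this
        rw [hz, Finset.mem_singleton] at hy
        rw [hz, hy]
      refine ⟨y, (Finset.mem_filter.1 hy).1, fun hyS => ?_, fun U => ?_⟩
      · have : y ∈ q.filter S := Finset.mem_filter.2 ⟨hy, hyS⟩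
        have := Finset.card_pos.2 ⟨y, this⟩
        omega
      · have h1 := hcX U
        have h2 := hcY U
        rw [hp2, hq2, hsing, hsing] at h1 h2
        exact ⟨h1, h2⟩

end Exchange

section Lists

open scoped Classical

variable {R : Finset ((ℝ × ℝ) × (ℝ × ℝ))}

theorem pathWeight_cons_cons (ε : (ℝ × ℝ) × (ℝ × ℝ) → ℝ) (u v : ℝ × ℝ) (L : List (ℝ × ℝ)) :
    pathWeight ε (u :: v :: L) = ε (u, v) + pathWeight ε (v :: L) := by
  simp [pathWeight]

theorem pathWeight_singleton (ε : (ℝ × ℝ) × (ℝ × ℝ) → ℝ) (u : ℝ × ℝ) :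
    pathWeight ε [u] = 0 := by
  simp [pathWeight]

theorem pathWeight_append_singleton (ε : (ℝ × ℝ) × (ℝ × ℝ) → ℝ) (u v : ℝ × ℝ) :
    ∀ L : List (ℝ × ℝ), L.getLast? = some u →
      pathWeight ε (L ++ [v]) = pathWeight ε L + ε (u, v)
  | [], h => by simp at h
  | [w], h => by
      obtain rfl : w = u := by simpa using h
      simp [pathWeight]
  | w :: w' :: L, h => by
      have := pathWeight_append_singleton ε u v (w' :: L) (by simpa using h)
      rw [List.cons_append, List.cons_append, pathWeight_cons_cons, pathWeight_cons_cons,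
        ← List.cons_append, this, add_assoc]

/-- The set of edges of a path. -/
noncomputable def edges (L : List (ℝ × ℝ)) : Finset ((ℝ × ℝ) × (ℝ × ℝ)) := (L.zip L.tail).toFinset

theorem edges_chain {E : Finset ((ℝ × ℝ) × (ℝ × ℝ))} (hE : ∀ e ∈ E, e.1.1 < e.2.1)
    (ε : (ℝ × ℝ) × (ℝ × ℝ) → ℝ) (t : List (ℝ × ℝ)) :
    ∀ s : ℝ × ℝ, List.IsChain (fun u v => (u, v) ∈ E) (s :: t) →
      edges (s :: t) ⊆ E ∧ IsSystem (edges (s :: t)) ∧ (∀ v ∈ t, s.1 < v.1) ∧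
      (∀ v, v ∈ ran (edges (s :: t)) ↔ v ∈ t) ∧
      (∀ v, v ∈ dom (edges (s :: t)) ↔ v ∈ s :: t ∧ (s :: t).getLast? ≠ some v) ∧
      ∑ e ∈ edges (s :: t), ε e = pathWeight ε (s :: t) := by
  induction t with
  | nil =>
    intro s _
    refine ⟨by simp [edges], ⟨by simp [edges], by simp [edges]⟩, by simp, by simp [edges, ran], ?_,
      by simp [edges, pathWeight]⟩
    intro v
    simp [edges, dom, eq_comm]
  | cons r t ih =>
    intro s h
    rw [List.isChain_cons_cons] at h
    obtain ⟨hsub, hsys, hlt, hran, hdom, hsum⟩ := ih r h.2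
    have hins : edges (s :: r :: t) = insert (s, r) (edges (r :: t)) := by
      ext e
      simp [edges]
    have hsr : s.1 < r.1 := hE _ h.1
    have hlt' : ∀ v ∈ r :: t, s.1 < v.1 := by
      intro v hv
      rcases List.mem_cons.1 hv with rfl | hv
      · exact hsr
      · exact hsr.trans (hlt v hv)
    have hs : s ∉ dom (edges (r :: t)) := fun h' => lt_irrefl _ (hlt' s ((hdom s).1 h').1)
    have hr : r ∉ ran (edges (r :: t)) := fun h' => lt_irrefl _ (hlt r ((hran r).1 h'))
    have hran' : ∀ v, v ∈ ran (insert (s, r) (edges (r :: t))) ↔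
        v = r ∨ v ∈ ran (edges (r :: t)) := by
      intro v
      simp [ran]
    have hdom' : ∀ v, v ∈ dom (insert (s, r) (edges (r :: t))) ↔
        v = s ∨ v ∈ dom (edges (r :: t)) := by
      intro v
      simp [dom]
    rw [hins]
    refine ⟨Finset.insert_subset h.1 hsub, ⟨?_, ?_⟩, hlt', ?_, ?_, ?_⟩
    · have h1 : ∀ e ∈ edges (r :: t), e.1 ≠ s := fun e he h' =>
        hs (by rw [← h']; exact fst_mem_dom he)
      have := hsys.fst_inj
      intro e he f hf hef
      rw [Finset.mem_insert] at he hf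
      grind
    · have h1 : ∀ e ∈ edges (r :: t), e.2 ≠ r := fun e he h' => by
        have := snd_mem_ran he
        rw [h'] at this
        exact hr this
      have := hsys.snd_inj
      intro e he f hf hef
      rw [Finset.mem_insert] at he hf
      grind
    · intro v
      rw [hran', hran, List.mem_cons]
    · intro v
      rw [hdom', hdom, List.mem_cons (l := r :: t), List.getLast?_cons_cons]
      constructor
      · rintro (rfl | hv)
        · exact ⟨Or.inl rfl, fun h' => lt_irrefl _ (hlt' _ (List.mem_of_getLast? h'))⟩
        · exact ⟨Or.inr hv.1, hv.2⟩
      · tauto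
    · rw [Finset.sum_insert (fun h' => hs (fst_mem_dom h')), hsum,
        pathWeight_cons_cons]

/-- A family of disjoint source-to-sink paths is recorded by the set of its edges. -/
theorem exists_system_of_paths (N : PlanarNetwork) (ε : (ℝ × ℝ) × (ℝ × ℝ) → ℝ) {m : ℕ}
    (F : Fin m → List (ℝ × ℝ)) (hF : ∀ j, IsThroughPath N (F j)) (hd : PairwiseVertexDisjoint F) :
    ∃ R ⊆ N.E, IsSystem R ∧ (∀ v ∈ starts R, ∃ j, (F j).head? = some v) ∧
      (∀ v, v ∈ ends R ↔ ∃ j, (F j).getLast? = some v) ∧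
      (∀ v ∈ starts R, v.1 = N.a) ∧ (∀ v ∈ ends R, v.1 = N.b) ∧
      (ends R).card = m ∧ ∑ e ∈ R, ε e = ∑ j, pathWeight ε (F j) := by
  choose p q hpq hp hq using hF
  have hshape : ∀ j, ∃ t, F j = p j :: t ∧ q j ∈ t := by
    intro j
    obtain ⟨h1, h2, h3, h4⟩ := hpq j
    obtain ⟨s, t, hst⟩ := List.exists_cons_of_ne_nil h1
    rw [hst] at h3 h4
    obtain rfl : s = p j := by simpa using h3
    refine ⟨t, hst, ?_⟩
    rcases List.mem_cons.1 (List.mem_of_getLast? h4) with h | h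
    · have h5 := hp j
      have h6 := hq j
      have h7 := N.hab
      rw [h] at h6
      linarith
    · exact h
  choose t hFt hqt using hshape
  have hE : ∀ e ∈ N.E, e.1.1 < e.2.1 := fun e he => (N.ends e he).2.2
  have hmain := fun j => edges_chain hE ε (t j) (p j) (hFt j ▸ (hpq j).2.1)
  simp only [← hFt] at hmain
  choose hsub hsys hlt hran hdom hsum using hmain
  have hlast := fun j => (hpq j).2.2.2
  have hhead := fun j => (hpq j).2.2.1
  have huniq : ∀ j j' v, v ∈ F j → v ∈ F j' → j = j' := by
    intro j j' v h h'
    by_contra hne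
    exact hd j j' hne v h h'
  have htF : ∀ j, ∀ v ∈ t j, v ∈ F j := fun j v hv => by
    rw [hFt]
    exact List.mem_cons_of_mem _ hv
  have hptF : ∀ j v, v ∈ F j → v = p j ∨ v ∈ t j := fun j v hv => by
    rw [hFt] at hv
    exact List.mem_cons.1 hv
  have hqF : ∀ j, q j ∈ F j := fun j => htF j _ (hqt j)
  set R := Finset.univ.biUnion (fun j => edges (F j)) with hR
  have hmem : ∀ e, e ∈ R ↔ ∃ j, e ∈ edges (F j) := by simp [hR]
  have hranR : ∀ v, v ∈ ran R ↔ ∃ j, v ∈ t j := by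
    intro v
    simp only [← hran, mem_ran, hmem]
    exact exists_comm
  have hdomR : ∀ v, v ∈ dom R ↔ ∃ j, v ∈ F j ∧ v ≠ q j := by
    intro v
    have h : ∀ j, v ∈ F j ∧ v ≠ q j ↔ v ∈ dom (edges (F j)) := by
      intro j
      rw [hdom, hlast, ne_comm, ne_eq, ne_eq, Option.some_inj]
    simp only [h, mem_dom, hmem]
    exact exists_comm
  have hends : ∀ v, v ∈ ends R ↔ ∃ j, q j = v := by
    intro v
    rw [mem_ends, hranR, hdomR]
    constructor
    · rintro ⟨⟨j, hj⟩, h⟩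
      by_contra! hcon
      exact h ⟨j, htF j v hj, (hcon j).symm⟩
    · rintro ⟨j, rfl⟩
      refine ⟨⟨j, hqt j⟩, ?_⟩
      rintro ⟨j', h1, h2⟩
      exact h2 (by rw [huniq j j' _ (hqF j) h1])
  have hstarts : ∀ v ∈ starts R, ∃ j, p j = v := by
    intro v hv
    rw [mem_starts, hranR, hdomR] at hv
    obtain ⟨⟨j, hj, -⟩, h⟩ := hv
    exact ⟨j, ((hptF j v hj).resolve_right fun h' => h ⟨j, h'⟩).symm⟩
  have hdomF : ∀ j, ∀ e ∈ edges (F j), e.1 ∈ F j := fun j e he =>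
    ((hdom j e.1).1 (fst_mem_dom he)).1
  have hranF : ∀ j, ∀ e ∈ edges (F j), e.2 ∈ F j := fun j e he =>
    htF j _ ((hran j e.2).1 (snd_mem_ran he))
  refine ⟨R, ?_, ⟨?_, ?_⟩, ?_, ?_, ?_, ?_, ?_, ?_⟩
  · intro e he
    obtain ⟨j, hj⟩ := (hmem e).1 he
    exact hsub j hj
  · intro e he f hf hef
    obtain ⟨j, hj⟩ := (hmem e).1 he
    obtain ⟨j', hj'⟩ := (hmem f).1 hf
    obtain rfl := huniq j j' e.1 (hdomF j e hj) (hef ▸ hdomF j' f hj')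
    exact (hsys j).fst_inj e hj f hj' hef
  · intro e he f hf hef
    obtain ⟨j, hj⟩ := (hmem e).1 he
    obtain ⟨j', hj'⟩ := (hmem f).1 hf
    obtain rfl := huniq j j' e.2 (hranF j e hj) (hef ▸ hranF j' f hj')
    exact (hsys j).snd_inj e hj f hj' hef
  · intro v hv
    obtain ⟨j, rfl⟩ := hstarts v hv
    exact ⟨j, hhead j⟩
  · intro v
    simp only [hends, hlast, Option.some_inj]
  · intro v hv
    obtain ⟨j, rfl⟩ := hstarts v hv
    exact hp j
  · intro v hv
    obtain ⟨j, rfl⟩ := (hends v).1 hv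
    exact hq j
  · have h : ends R = Finset.univ.image q := by
      ext v
      rw [hends]
      simp
    rw [h, Finset.card_image_of_injective, Finset.card_univ, Fintype.card_fin]
    intro j j' hjj
    exact huniq j j' _ (hqF j) (hjj ▸ hqF j')
  · rw [hR, Finset.sum_biUnion]
    · exact Finset.sum_congr rfl fun j _ => hsum j
    · intro j _ j' _ hne
      refine Finset.disjoint_left.2 fun e h1 h2 => hne (huniq j j' _ (hdomF j e h1) (hdomF j' e h2))

/-- The paths traced by a system, indexed by the vertices with no outgoing edge: `F w` is the
maximal path ending at `w`. -/
theorem IsSystem.exists_paths (ε : (ℝ × ℝ) × (ℝ × ℝ) → ℝ) (hR : IsSystem R)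
    (hlt : ∀ e ∈ R, e.1.1 < e.2.1) :
    ∃ F : ℝ × ℝ → List (ℝ × ℝ),
      (∀ w ∉ dom R, List.IsChain (fun u v => (u, v) ∈ R) (F w) ∧ (F w).getLast? = some w ∧
        ∃ s ∉ ran R, (F w).head? = some s) ∧
      (∀ w ∉ dom R, ∀ w' ∉ dom R, w ≠ w' → ∀ v ∈ F w, v ∉ F w') ∧
      (∀ w ∉ dom R, w ∉ ran R → F w = [w]) ∧
      ∑ w ∈ ends R, pathWeight ε (F w) = ∑ e ∈ R, ε e := by
  induction R using Finset.induction_on_max_value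
    (fun e : (ℝ × ℝ) × (ℝ × ℝ) => e.1.1) with
  | empty =>
    refine ⟨fun w => [w], ?_, ?_, ?_, ?_⟩
    · simp [ran]
    · intro w _ w' _ hne v hv hv'
      rw [List.mem_singleton] at hv hv'
      exact hne (hv ▸ hv')
    · simp
    · simp [ends, ran, dom]
  | insert e R he hmax ih =>
    obtain ⟨u, v⟩ := e
    have huv : u.1 < v.1 := hlt _ (Finset.mem_insert_self _ _)
    obtain ⟨F, hF, hdisj, hsing, hsum⟩ := ih (hR.subset (Finset.subset_insert _ _))
      fun e he => hlt e (Finset.mem_insert_of_mem he)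
    have hu : u ∉ dom R := by
      intro h
      obtain ⟨w, hw⟩ := mem_dom.1 h
      exact he (hR.fst_inj _ (Finset.mem_insert_of_mem hw) _ (Finset.mem_insert_self _ _) rfl ▸ hw)
    have hvr : v ∉ ran R := by
      intro h
      obtain ⟨w, hw⟩ := mem_ran.1 h
      exact he (hR.snd_inj _ (Finset.mem_insert_of_mem hw) _ (Finset.mem_insert_self _ _) rfl ▸ hw)
    have hvd : v ∉ dom R := by
      intro h
      obtain ⟨w, hw⟩ := mem_dom.1 h
      exact absurd huv (not_lt.2 (hmax _ hw))
    have hne : u ≠ v := by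
      rintro rfl
      exact lt_irrefl _ huv
    have hdom : ∀ w, w ∈ dom (insert (u, v) R) ↔ w = u ∨ w ∈ dom R := fun w => by simp [dom]
    have hran : ∀ w, w ∈ ran (insert (u, v) R) ↔ w = v ∨ w ∈ ran R := fun w => by simp [ran]
    have hmemF : ∀ w ∉ dom R, w ∈ F w := fun w hw => List.mem_of_getLast? (hF w hw).2.1
    have hchain : ∀ w ∉ dom R, List.IsChain (fun a b => (a, b) ∈ insert (u, v) R) (F w) :=
      fun w hw => (hF w hw).1.imp fun a b h => Finset.mem_insert_of_mem h
    have hvF : ∀ w ∉ dom R, w ≠ v → v ∉ F w := fun w hw hwv =>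
      hdisj v hvd w hw hwv.symm v (hmemF v hvd)
    have hheadF : ∀ w ∉ dom R, w ≠ v → ∃ s ∉ ran (insert (u, v) R), (F w).head? = some s := by
      intro w hw hwv
      obtain ⟨s, hs, hs'⟩ := (hF w hw).2.2
      refine ⟨s, ?_, hs'⟩
      rw [hran]
      rintro (rfl | h)
      · exact hvF w hw hwv (List.mem_of_head? hs')
      · exact hs h
    have hchainv : List.IsChain (fun a b => (a, b) ∈ insert (u, v) R) (F u ++ [v]) := by
      rw [List.isChain_append]
      refine ⟨hchain u hu, List.isChain_singleton _, ?_⟩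
      intro a ha b hb
      rw [(hF u hu).2.1] at ha
      simp only [Option.mem_def, Option.some_inj, List.head?_cons] at ha hb
      rw [← ha, ← hb]
      exact Finset.mem_insert_self _ _
    have hdisjv : ∀ w ∉ dom (insert (u, v) R), w ≠ v → ∀ a ∈ F u ++ [v], a ∉ F w := by
      intro w hw hwv a ha
      rw [hdom, not_or] at hw
      rcases List.mem_append.1 ha with ha | ha
      · exact hdisj u hu w hw.2 (Ne.symm hw.1) a ha
      · rw [List.mem_singleton.1 ha]
        exact hvF w hw.2 hwv
    refine ⟨Function.update F v (F u ++ [v]), ?_, ?_, ?_, ?_⟩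
    · intro w hw
      rw [hdom, not_or] at hw
      rcases eq_or_ne w v with rfl | hwv
      · rw [Function.update_self]
        refine ⟨hchainv, by simp, ?_⟩
        obtain ⟨s, hs, hs'⟩ := hheadF u hu hne
        exact ⟨s, hs, by rw [List.head?_append, hs', Option.some_or]⟩
      · rw [Function.update_of_ne hwv]
        exact ⟨hchain w hw.2, (hF w hw.2).2.1, hheadF w hw.2 hwv⟩
    · intro w hw w' hw' hww a ha ha'
      rcases eq_or_ne w v with rfl | hwv
      · rw [Function.update_self] at ha
        rw [Function.update_of_ne hww.symm] at ha'
        exact hdisjv w' hw' hww.symm a ha ha'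
      · rw [Function.update_of_ne hwv] at ha
        rcases eq_or_ne w' v with rfl | hwv'
        · rw [Function.update_self] at ha'
          exact hdisjv w hw hww a ha' ha
        · rw [Function.update_of_ne hwv'] at ha'
          rw [hdom, not_or] at hw hw'
          exact hdisj w hw.2 w' hw'.2 hww a ha ha'
    · intro w hw hw'
      rw [hdom, not_or] at hw
      rw [hran, not_or] at hw'
      rw [Function.update_of_ne hw'.1]
      exact hsing w hw.2 hw'.2
    · have hends : ends (insert (u, v) R) = insert v ((ends R).erase u) := by
        ext w
        rw [mem_ends, hdom, hran, Finset.mem_insert, Finset.mem_erase, mem_ends]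
        grind
      have hv : v ∉ (ends R).erase u := fun h =>
        hvr (mem_ends.1 (Finset.mem_of_mem_erase h)).1
      rw [hends, Finset.sum_insert hv, Finset.sum_insert he, Function.update_self,
        pathWeight_append_singleton ε u v _ (hF u hu).2.1, ← hsum]
      have h1 : ∑ w ∈ (ends R).erase u, pathWeight ε (Function.update F v (F u ++ [v]) w) =
          ∑ w ∈ (ends R).erase u, pathWeight ε (F w) := by
        refine Finset.sum_congr rfl fun w hw => ?_
        rw [Function.update_of_ne]
        rintro rfl
        exact hv hw
      have h2 : pathWeight ε (F u) + ∑ w ∈ (ends R).erase u, pathWeight ε (F w) =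
          ∑ w ∈ ends R, pathWeight ε (F w) := by
        by_cases hue : u ∈ ends R
        · exact Finset.add_sum_erase (ends R) (fun w => pathWeight ε (F w)) hue
        · have hur : u ∉ ran R := fun h => hue (mem_ends.2 ⟨h, hu⟩)
          rw [Finset.erase_eq_of_notMem hue, hsing u hu hur, pathWeight_singleton, zero_add]
      rw [h1, ← h2]
      ring

/-- A system starting at sources and ending at sinks is the edge set of a family of disjoint
source-to-sink paths. -/
theorem exists_paths_of_system (N : PlanarNetwork) (ε : (ℝ × ℝ) × (ℝ × ℝ) → ℝ) (hR : IsSystem R)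
    (hRE : R ⊆ N.E) (hs : ∀ v ∈ starts R, v.1 = N.a) (ht : ∀ v ∈ ends R, v.1 = N.b) {m : ℕ}
    (hm : (ends R).card = m) :
    ∃ F : Fin m → List (ℝ × ℝ), (∀ j, IsThroughPath N (F j)) ∧ PairwiseVertexDisjoint F ∧
      (∀ j, ∃ v ∈ starts R, (F j).head? = some v) ∧
      (∀ v ∈ ends R, ∃ j, (F j).getLast? = some v) ∧
      ∑ j, pathWeight ε (F j) = ∑ e ∈ R, ε e := by
  obtain ⟨F, hF, hdisj, -, hsum⟩ := hR.exists_paths ε fun e he => (N.ends e (hRE he)).2.2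
  let g := (Finset.equivFinOfCardEq hm).symm
  have hg : ∀ j, (g j : ℝ × ℝ) ∉ dom R := fun j => (mem_ends.1 (g j).2).2
  have hhead : ∀ j, ∃ v ∈ starts R, (F (g j)).head? = some v := by
    intro j
    obtain ⟨h1, h2, s, hs, hs'⟩ := hF _ (hg j)
    refine ⟨s, mem_starts.2 ⟨?_, hs⟩, hs'⟩
    rcases hL : F (g j) with _ | ⟨r, _ | ⟨r', L⟩⟩
    · simp [hL] at hs'
    · rw [hL] at hs' h2
      simp only [List.head?_cons, Option.some_inj, List.getLast?_singleton] at hs' h2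
      exact absurd (mem_ends.1 (g j).2).1 (by rwa [← h2, hs'])
    · rw [hL] at hs' h1
      simp only [List.head?_cons, Option.some_inj] at hs'
      rw [List.isChain_cons_cons] at h1
      exact mem_dom.2 ⟨r', hs' ▸ h1.1⟩
  refine ⟨fun j => F (g j), ?_, ?_, hhead, ?_, ?_⟩
  · intro j
    obtain ⟨s, hs1, hs2⟩ := hhead j
    obtain ⟨h1, h2, -⟩ := hF _ (hg j)
    refine ⟨s, g j, ⟨?_, h1.imp fun a b h => hRE h, hs2, h2⟩, hs s hs1, ht _ (g j).2⟩
    intro (h : F (g j) = [])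
    simp [h] at hs2
  · intro j j' hne
    exact hdisj _ (hg j) _ (hg j') fun h => hne (g.injective (Subtype.ext h))
  · intro v hv
    refine ⟨g.symm ⟨v, hv⟩, ?_⟩
    have := (hF _ (hg (g.symm ⟨v, hv⟩))).2.1
    change (F (g (g.symm ⟨v, hv⟩))).getLast? = some v
    rwa [Equiv.apply_symm_apply] at this ⊢
  · rw [← hsum, ← Finset.sum_coe_sort (ends R)]
    exact g.sum_comp (fun w => pathWeight ε (F w))

end Lists

section Concatenation

open scoped Classical

variable {Γ Δ : PlanarNetwork} {R : Finset ((ℝ × ℝ) × (ℝ × ℝ))}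

/-- The edge sets of `ΓΔ`-paths. -/
structure IsConfig (Γ Δ : PlanarNetwork) (R : Finset ((ℝ × ℝ) × (ℝ × ℝ))) : Prop where
  sub : R ⊆ Γ.E ∪ Δ.E
  sys : IsSystem R
  starts_eq : ∀ v ∈ starts R, v.1 = Γ.a
  ends_eq : ∀ v ∈ ends R, v.1 = Γ.b ∨ v.1 = Δ.b

theorem dom_bounds {N : PlanarNetwork} (h : R ⊆ N.E) {v : ℝ × ℝ} (hv : v ∈ dom R) :
    N.a ≤ v.1 ∧ v.1 < N.b := by
  obtain ⟨w, hw⟩ := mem_dom.1 hv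
  obtain ⟨h1, h2, h3⟩ := N.ends _ (h hw)
  exact ⟨(N.strip _ h1).1, h3.trans_le (N.strip _ h2).2⟩

theorem ran_bounds {N : PlanarNetwork} (h : R ⊆ N.E) {v : ℝ × ℝ} (hv : v ∈ ran R) :
    N.a < v.1 ∧ v.1 ≤ N.b := by
  obtain ⟨w, hw⟩ := mem_ran.1 hv
  obtain ⟨h1, h2, h3⟩ := N.ends _ (h hw)
  exact ⟨(N.strip _ h1).1.trans_lt h3, (N.strip _ h2).2⟩

theorem mem_dom_union {P Q : Finset ((ℝ × ℝ) × (ℝ × ℝ))} {v : ℝ × ℝ} :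
    v ∈ dom (P ∪ Q) ↔ v ∈ dom P ∨ v ∈ dom Q := by
  simp only [mem_dom, Finset.mem_union, exists_or]

theorem mem_ran_union {P Q : Finset ((ℝ × ℝ) × (ℝ × ℝ))} {v : ℝ × ℝ} :
    v ∈ ran (P ∪ Q) ↔ v ∈ ran P ∨ v ∈ ran Q := by
  simp only [mem_ran, Finset.mem_union, exists_or]

theorem disjoint_of_subset_edges (hc : Δ.a = Γ.b) {P Q : Finset ((ℝ × ℝ) × (ℝ × ℝ))}
    (hP : P ⊆ Γ.E) (hQ : Q ⊆ Δ.E) : Disjoint P Q := by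
  refine Finset.disjoint_left.2 fun e h1 h2 => ?_
  have h3 := (dom_bounds hP (fst_mem_dom h1)).2
  have h4 := (dom_bounds hQ (fst_mem_dom h2)).1
  linarith

/-- The endpoints at the two boundary levels of the union of a system in `Γ` and a system in `Δ`
continuing it. -/
theorem ends_union (hc : Δ.a = Γ.b) {P Q : Finset ((ℝ × ℝ) × (ℝ × ℝ))}
    (hP : P ⊆ Γ.E) (hQ : Q ⊆ Δ.E) (hPe : ∀ v ∈ ends P, v.1 = Γ.b) (hQe : ∀ v ∈ ends Q, v.1 = Δ.b)
    (hQs : starts Q ⊆ ends P) (v : ℝ × ℝ) :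
    (v ∈ ends (P ∪ Q) ∧ v.1 = Γ.b ↔ v ∈ ends P \ starts Q) ∧
      (v ∈ ends (P ∪ Q) ∧ v.1 = Δ.b ↔ v ∈ ends Q) ∧
      (v ∈ ends (P ∪ Q) → v.1 = Γ.b ∨ v.1 = Δ.b) ∧
      (v ∈ starts (P ∪ Q) → v ∈ starts P) := by
  have h1 : v ∈ dom P → _ := dom_bounds hP
  have h2 : v ∈ ran P → _ := ran_bounds hP
  have h3 : v ∈ dom Q → _ := dom_bounds hQ
  have h4 : v ∈ ran Q → _ := ran_bounds hQ
  have h5 := hPe v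
  have h6 := hQe v
  have h7 := @hQs v
  have h8 := Γ.hab
  have h9 := Δ.hab
  simp only [Finset.mem_sdiff, mem_ends, mem_starts, mem_dom_union, mem_ran_union] at *
  grind

theorem exists_config_of_mem_gdWeights (hc : Δ.a = Γ.b) {ε : (ℝ × ℝ) × (ℝ × ℝ) → ℝ} {i k : ℕ}
    {x : ℝ} (hx : x ∈ gdWeights Γ Δ ε i k) :
    ∃ R, IsConfig Γ Δ R ∧ numEnds R (fun v => v.1 = Γ.b) + i = k ∧
      numEnds R (fun v => v.1 = Δ.b) = i ∧ ∑ e ∈ R, ε e = x := by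
  obtain ⟨G, D, hG, hD, hGd, hDd, hGD, rfl⟩ := hx
  obtain ⟨P, hP, hPsys, -, hPends, hPa, hPb, hPk, hPsum⟩ := exists_system_of_paths Γ ε G hG hGd
  obtain ⟨Q, hQ, hQsys, hQstarts, -, -, hQb, hQi, hQsum⟩ := exists_system_of_paths Δ ε D hD hDd
  have hQs : starts Q ⊆ ends P := by
    intro v hv
    obtain ⟨j, hj⟩ := hQstarts v hv
    obtain ⟨m, hm⟩ := hGD j
    exact (hPends v).2 ⟨m, hm ▸ hj⟩
  have hunion := ends_union hc hP hQ hPb hQb hQs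
  refine ⟨P ∪ Q, ⟨Finset.union_subset_union hP hQ, ⟨?_, ?_⟩, ?_, ?_⟩, ?_, ?_, ?_⟩
  · have h1 := hPsys.fst_inj
    have h2 := hQsys.fst_inj
    have h3 : ∀ e ∈ P, _ := fun e he => dom_bounds hP (fst_mem_dom he)
    have h4 : ∀ e ∈ Q, _ := fun e he => dom_bounds hQ (fst_mem_dom he)
    intro e he f hf hef
    rw [Finset.mem_union] at he hf
    grind
  · have h1 := hPsys.snd_inj
    have h2 := hQsys.snd_inj
    have h3 : ∀ e ∈ P, _ := fun e he => ran_bounds hP (snd_mem_ran he)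
    have h4 : ∀ e ∈ Q, _ := fun e he => ran_bounds hQ (snd_mem_ran he)
    intro e he f hf hef
    rw [Finset.mem_union] at he hf
    grind
  · exact fun v hv => hPa v ((hunion v).2.2.2 hv)
  · exact fun v hv => (hunion v).2.2.1 hv
  · have h : (ends (P ∪ Q)).filter (fun v => v.1 = Γ.b) = ends P \ starts Q := by
      ext v
      rw [Finset.mem_filter]
      exact (hunion v).1
    have h2 := Finset.card_sdiff_add_card_eq_card hQs
    rw [hQsys.card_starts, hQi, hPk] at h2
    rw [numEnds]
    convert h2
  · have h : (ends (P ∪ Q)).filter (fun v => v.1 = Δ.b) = ends Q := by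
      ext v
      rw [Finset.mem_filter]
      exact (hunion v).2.1
    rw [numEnds, ← hQi]
    convert congrArg Finset.card h
  · rw [← hPsum, ← hQsum]
    convert Finset.sum_union (disjoint_of_subset_edges hc hP hQ)

theorem IsConfig.mem_gdWeights (hc : Δ.a = Γ.b) (ε : (ℝ × ℝ) × (ℝ × ℝ) → ℝ)
    (hR : IsConfig Γ Δ R) {i k : ℕ} (hk : numEnds R (fun v => v.1 = Γ.b) + i = k)
    (hi : numEnds R (fun v => v.1 = Δ.b) = i) : ∑ e ∈ R, ε e ∈ gdWeights Γ Δ ε i k := by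
  obtain ⟨P, hP, hPR⟩ : ∃ P ⊆ Γ.E, P = R.filter (· ∈ Γ.E) :=
    ⟨_, fun e he => (Finset.mem_filter.1 he).2, rfl⟩
  obtain ⟨Q, hQ, hQR⟩ : ∃ Q ⊆ Δ.E, Q = R.filter (· ∈ Δ.E) :=
    ⟨_, fun e he => (Finset.mem_filter.1 he).2, rfl⟩
  obtain rfl : R = P ∪ Q := by
    ext e
    have := @hR.sub e
    simp only [hPR, hQR, Finset.mem_union, Finset.mem_filter] at this ⊢
    tauto
  have hbounds : ∀ v, (v ∈ starts P → v.1 = Γ.a) ∧ (v ∈ ends P → v.1 = Γ.b) ∧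
      (v ∈ starts Q → v.1 = Δ.a ∧ v ∈ ends P) ∧ (v ∈ ends Q → v.1 = Δ.b) := by
    intro v
    have h1 : v ∈ dom P → _ := dom_bounds hP
    have h2 : v ∈ ran P → _ := ran_bounds hP
    have h3 : v ∈ dom Q → _ := dom_bounds hQ
    have h4 : v ∈ ran Q → _ := ran_bounds hQ
    have h5 := hR.starts_eq v
    have h6 := hR.ends_eq v
    have h8 := Γ.hab
    have h9 := Δ.hab
    clear hi hk hPR hQR hR
    simp only [mem_ends, mem_starts, mem_dom_union, mem_ran_union] at h5 h6 ⊢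
    by_cases h10 : v ∈ dom P <;> by_cases h11 : v ∈ dom Q <;> by_cases h12 : v ∈ ran P <;> grind
  have hPsys := hR.sys.subset (Finset.subset_union_left : P ⊆ P ∪ Q)
  have hQsys := hR.sys.subset (Finset.subset_union_right : Q ⊆ P ∪ Q)
  have hQs : starts Q ⊆ ends P := fun v hv => ((hbounds v).2.2.1 hv).2
  have hunion := ends_union hc hP hQ (fun v => (hbounds v).2.1) (fun v => (hbounds v).2.2.2) hQs
  have hQi : (ends Q).card = i := by
    rw [← hi, numEnds]
    congr 1
    ext v
    rw [Finset.mem_filter]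
    exact (hunion v).2.1.symm
  have hPk : (ends P).card = k := by
    have h : (ends P \ starts Q).card = numEnds (P ∪ Q) (fun v => v.1 = Γ.b) := by
      rw [numEnds]
      congr 1
      ext v
      rw [Finset.mem_filter]
      exact (hunion v).1.symm
    have h2 := Finset.card_sdiff_add_card_eq_card hQs
    rw [hQsys.card_starts, hQi] at h2
    omega
  obtain ⟨G, hG, hGd, -, hGl, hGsum⟩ := exists_paths_of_system Γ ε hPsys hP
    (fun v => (hbounds v).1) (fun v => (hbounds v).2.1) hPk
  obtain ⟨D, hD, hDd, hDh, -, hDsum⟩ := exists_paths_of_system Δ ε hQsys hQ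
    (fun v hv => ((hbounds v).2.2.1 hv).1) (fun v => (hbounds v).2.2.2) hQi
  refine ⟨G, D, hG, hD, hGd, hDd, fun j => ?_, ?_⟩
  · obtain ⟨v, hv, hj⟩ := hDh j
    obtain ⟨m, hm⟩ := hGl v (hQs hv)
    exact ⟨m, hj.trans hm.symm⟩
  · rw [hGsum, hDsum]
    convert Finset.sum_union (disjoint_of_subset_edges hc hP hQ)

/-- Exchange property of `ΓΔ`-paths. -/
theorem IsConfig.exchange (hc : Δ.a = Γ.b) {X Y : Finset ((ℝ × ℝ) × (ℝ × ℝ))}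
    (hX : IsConfig Γ Δ X) (hY : IsConfig Γ Δ Y) (S : ℝ × ℝ → Prop)
    (hS : numEnds Y S < numEnds X S) :
    ∃ X' Y', IsConfig Γ Δ X' ∧ IsConfig Γ Δ Y' ∧
      (∀ ε : (ℝ × ℝ) × (ℝ × ℝ) → ℝ,
        ∑ e ∈ X', ε e + ∑ e ∈ Y', ε e = ∑ e ∈ X, ε e + ∑ e ∈ Y, ε e) ∧
      ∃ x ∈ ends X, S x ∧
        ((∀ U : ℝ × ℝ → Prop, numEnds X' U + (if U x then 1 else 0) = numEnds X U ∧
            numEnds Y' U = numEnds Y U + (if U x then 1 else 0)) ∨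
          ∃ y ∈ ends Y, ¬ S y ∧ ∀ U : ℝ × ℝ → Prop,
            numEnds X' U + (if U x then 1 else 0) = numEnds X U + (if U y then 1 else 0) ∧
            numEnds Y' U + (if U y then 1 else 0) = numEnds Y U + (if U x then 1 else 0)) := by
  have hab := Γ.hab
  have hab' := Δ.hab
  have hdisj : ∀ {X Y}, IsConfig Γ Δ X → IsConfig Γ Δ Y → Disjoint (starts X) (ends Y) := by
    intro X Y hX hY
    refine Finset.disjoint_left.2 fun v h1 h2 => ?_
    have h3 := hX.starts_eq v h1
    rcases hY.ends_eq v h2 with h4 | h4 <;> linarith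
  obtain ⟨X', Y', hX', hY', hsX, hsY, hstX, hstY, heX, heY, hrest⟩ :=
    hX.sys.exchange hY.sys (hdisj hX hY) (hdisj hY hX) S hS
  exact ⟨X', Y',
    ⟨fun e he => (hsX e he).elim (fun h => hX.sub h) (fun h => hY.sub h), hX',
      fun v hv => (hstX v hv).elim (hX.starts_eq v) (hY.starts_eq v),
      fun v hv => (heX v hv).elim (hX.ends_eq v) (hY.ends_eq v)⟩,
    ⟨fun e he => (hsY e he).elim (fun h => hX.sub h) (fun h => hY.sub h), hY',
      fun v hv => (hstY v hv).elim (hX.starts_eq v) (hY.starts_eq v),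
      fun v hv => (heY v hv).elim (hX.ends_eq v) (hY.ends_eq v)⟩, hrest⟩

theorem IsConfig.numEnds_true (hc : Δ.a = Γ.b) (hR : IsConfig Γ Δ R) :
    numEnds R (fun _ => True) =
      numEnds R (fun v => v.1 = Γ.b) + numEnds R (fun v => v.1 = Δ.b) := by
  rw [numEnds, numEnds, numEnds, ← Finset.card_union_of_disjoint]
  · congr 1
    ext v
    have := hR.ends_eq v
    simp only [Finset.mem_filter, Finset.mem_union]
    tauto
  · refine Finset.disjoint_left.2 fun v h1 h2 => ?_
    have := Δ.hab
    have h3 := (Finset.mem_filter.1 h1).2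
    have h4 := (Finset.mem_filter.1 h2).2
    linarith

end Concatenation

end PathSystem

/-- Theorem `thm:Horn1`.  For composable rank-`n` planar
networks `Γ`, `Δ` and a real weighting `ε` of `Γ ∘ Δ`, the numbers
`t i k = m_i^k(ε)` — whenever they all exist, i.e. are greatest elements of
the corresponding sets of `ΓΔ`-path weights — satisfy all three families of
hive (`C₃`) inequalities. -/
theorem concatenated_networks_hive (n : ℕ) (Γ Δ : PlanarNetwork)
    (hΓ : Γ.HasRank n) (hΔ : Δ.HasRank n) (hcomp : Composable Γ Δ)
    (ε : (ℝ × ℝ) × (ℝ × ℝ) → ℝ) (t : ℕ → ℕ → ℝ)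
    (ht : ∀ k, k ≤ n → ∀ i, i ≤ k → IsGreatest (gdWeights Γ Δ ε i k) (t i k)) :
    ∀ i k, 0 < i → i ≤ k → k < n →
      t i (k + 1) + t (i - 1) k ≥ t (i - 1) (k + 1) + t i k ∧
      t i (k + 1) + t i k ≥ t (i + 1) (k + 1) + t (i - 1) k ∧
      t i k + t (i - 1) k ≥ t i (k + 1) + t (i - 1) (k - 1) := by
  intro i k hi hik hk
  obtain ⟨j, rfl⟩ : ∃ j, i = j + 1 := ⟨i - 1, by omega⟩
  have hc : Δ.a = Γ.b := hcomp.1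
  have hne : Γ.b ≠ Δ.b := (hc ▸ Δ.hab).ne
  have hne' := hne.symm
  have hmax : ∀ R, PathSystem.IsConfig Γ Δ R → ∀ i k, k ≤ n →
      PathSystem.numEnds R (fun v => v.1 = Γ.b) + i = k →
      PathSystem.numEnds R (fun v => v.1 = Δ.b) = i → ∑ e ∈ R, ε e ≤ t i k :=
    fun R hR i k hkn h1 h2 =>
    (ht k hkn i (by omega)).2 (hR.mem_gdWeights hc ε h1 h2)
  have hatt : ∀ i k, i ≤ k → k ≤ n → ∃ R, PathSystem.IsConfig Γ Δ R ∧
      PathSystem.numEnds R (fun v => v.1 = Γ.b) + i = k ∧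
      PathSystem.numEnds R (fun v => v.1 = Δ.b) = i ∧ ∑ e ∈ R, ε e = t i k := fun i k hik hkn =>
    PathSystem.exists_config_of_mem_gdWeights hc (ht k hkn i hik).1
  rw [Nat.add_sub_cancel]
  refine ⟨?_, ?_, ?_⟩
  · obtain ⟨X, hX, hX1, hX2, hX3⟩ := hatt j (k + 1) (by omega) (by omega)
    obtain ⟨Y, hY, hY1, hY2, hY3⟩ := hatt (j + 1) k hik hk.le
    obtain ⟨X', Y', hX', hY', hsum, x, -, hxS, h⟩ :=
      hX.exchange hc hY (fun v => v.1 = Γ.b) (by omega)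
    have hs := hsum ε
    rcases h with h | ⟨y, hy, hyS, h⟩
    · have hA := h (fun v => v.1 = Γ.b)
      have hB := h (fun v => v.1 = Δ.b)
      simp only [hxS, hne, if_true, if_false] at hA hB
      have h1 := hmax X' hX' j k hk.le (by omega) (by omega)
      have h2 := hmax Y' hY' (j + 1) (k + 1) hk (by omega) (by omega)
      linarith
    · have hyb : y.1 = Δ.b := (hY.ends_eq y hy).resolve_left hyS
      have hA := h (fun v => v.1 = Γ.b)
      have hB := h (fun v => v.1 = Δ.b)
      simp only [hxS, hyb, hne, hne', if_true, if_false] at hA hB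
      have h1 := hmax X' hX' (j + 1) (k + 1) hk (by omega) (by omega)
      have h2 := hmax Y' hY' j k hk.le (by omega) (by omega)
      linarith
  · obtain ⟨X, hX, hX1, hX2, hX3⟩ := hatt (j + 1 + 1) (k + 1) (by omega) (by omega)
    obtain ⟨Y, hY, hY1, hY2, hY3⟩ := hatt j k (by omega) hk.le
    obtain ⟨X', Y', hX', hY', hsum, x, -, hxS, h⟩ :=
      hX.exchange hc hY (fun v => v.1 = Δ.b) (by omega)
    have hs := hsum ε
    rcases h with h | ⟨y, hy, hyS, h⟩
    · have hA := h (fun v => v.1 = Γ.b)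
      have hB := h (fun v => v.1 = Δ.b)
      simp only [hxS, hne', if_true, if_false] at hA hB
      have h1 := hmax X' hX' (j + 1) k hk.le (by omega) (by omega)
      have h2 := hmax Y' hY' (j + 1) (k + 1) hk (by omega) (by omega)
      linarith
    · have hyb : y.1 = Γ.b := (hY.ends_eq y hy).resolve_right hyS
      have hA := h (fun v => v.1 = Γ.b)
      have hB := h (fun v => v.1 = Δ.b)
      simp only [hxS, hyb, hne, hne', if_true, if_false] at hA hB
      have h1 := hmax X' hX' (j + 1) (k + 1) hk (by omega) (by omega)
      have h2 := hmax Y' hY' (j + 1) k hk.le (by omega) (by omega)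
      linarith
  · obtain ⟨X, hX, hX1, hX2, hX3⟩ := hatt (j + 1) (k + 1) (by omega) (by omega)
    obtain ⟨Y, hY, hY1, hY2, hY3⟩ := hatt j (k - 1) (by omega) (by omega)
    have hXn := hX.numEnds_true hc
    have hYn := hY.numEnds_true hc
    obtain ⟨X', Y', hX', hY', hsum, x, hx, -, h⟩ :=
      hX.exchange hc hY (fun _ => True) (by omega)
    have hs := hsum ε
    have h := h.resolve_right fun ⟨y, _, hy, _⟩ => hy trivial
    have hA := h (fun v => v.1 = Γ.b)
    have hB := h (fun v => v.1 = Δ.b)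
    rcases hX.ends_eq x hx with hxb | hxb
    · simp only [hxb, hne, if_true, if_false] at hA hB
      have h1 := hmax X' hX' (j + 1) k hk.le (by omega) (by omega)
      have h2 := hmax Y' hY' j k hk.le (by omega) (by omega)
      linarith
    · simp only [hxb, hne', if_true, if_false] at hA hB
      have h1 := hmax X' hX' j k hk.le (by omega) (by omega)
      have h2 := hmax Y' hY' (j + 1) k hk.le (by omega) (by omega)
      linarith
end
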